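/- arXiv:1408.1597 — 6 statements merged into one kernel-verified Lean document; each statement's English description precedes it below -/
import Mathlib

section
/- For every nonnegative integer n, the overpartition number satisfies p̄(16n+14) ≡ 0 (mod 16). -/
/-!
Write `P` for the generating function of overpartitions, which is `∏ (1 + X^i) / (1 - X^i)`.
Gauss's identity says `P * (1 + 2 * S) = 1`, where `S = ∑_{k ≥ 1} (-1)^k X^(k^2)`. Expanding the
inverse gives `P = 1 - 2 S + 4 S^2 - 8 S^3 + 16 S^4 P`, so it suffices to look at the coefficients
of `S`, `S^2` and `S^3` at an exponent `N ≡ 14 [MOD 16]`. The first two vanish, because `N` is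
neither a square nor a sum of two squares modulo `8`. The third is even: modulo `2` the
coefficients of `S^2` are supported on exponents `2 a^2` (`odd_coeff_sq`), so an odd coefficient
of `S^3` at `N` would give `N = 2 a^2 + b^2`, which is impossible modulo `16`.

Gauss's identity (`gauss_identity`) is the limit of a finite identity of Shanks type
(`shanks_identity`): multiplied by `∏_{i ≤ n} (1 + q^i)`, the truncation `1 + 2 ∑_{k ≤ n}` of the
theta series is an explicit sum of `n + 1` terms, whose zeroth term is `∏_{i ≤ n} (1 - q^i)` and
whose other terms are divisible by `q^(n + 1)`. It is proved by induction on `n` with a telescoping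
sum.
-/

/-- The number of overpartitions of `n`: pairs `(μ, λ)` where `μ` is a partition of some
`m ≤ n` into distinct parts and `λ` is a partition of `n - m`. -/
def overpartition (n : ℕ) : ℕ :=
  ∑ m ∈ Finset.range (n + 1),
    (Nat.Partition.distincts m).card * Fintype.card (Nat.Partition (n - m))

namespace Overpartition

open Finset PowerSeries Filter
open scoped PowerSeries.WithPiTopology

/-! ### A finite form of Gauss's identity -/

section Finite

variable {R : Type*} [CommRing R]

/-- The product `(-1; q)_s * (q; q)_n / (q; q)_s` (for `s ≤ n`), written without division. -/
def shanksTerm (q : R) (n s : ℕ) : R :=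
  (∏ i ∈ range s, (1 + q ^ i)) * ∏ i ∈ Ico s n, (1 - q ^ (i + 1))

lemma shanksTerm_succ_left (q : R) {n s : ℕ} (h : s ≤ n) :
    shanksTerm q (n + 1) s = shanksTerm q n s * (1 - q ^ (n + 1)) := by
  simp [shanksTerm, prod_Ico_succ_top h, mul_assoc]

lemma shanksTerm_mul_one_add (q : R) {n s : ℕ} (h : s < n) :
    shanksTerm q n s * (1 + q ^ s) = shanksTerm q n (s + 1) * (1 - q ^ (s + 1)) := by
  simp only [shanksTerm, prod_range_succ, prod_eq_prod_Ico_succ_bot h]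
  ring

lemma shanksTerm_self_succ (q : R) (n : ℕ) :
    shanksTerm q (n + 1) (n + 1) = 2 * ∏ i ∈ range n, (1 + q ^ (i + 1)) := by
  simp only [shanksTerm, Ico_self, prod_empty, mul_one, prod_range_succ', pow_zero]
  ring

/-- The telescoping sum behind the induction step of `shanks_identity`. -/
lemma shanks_telescope (q : R) (n m : ℕ) (h : m ≤ n) :
    ∑ s ∈ range (m + 1), (-1) ^ s * q ^ (s * (n + 1)) * shanksTerm q n s *
        (q ^ s * (1 - q ^ (n + 1)) - (1 + q ^ (n + 1))) =
      (-1) ^ (m + 1) * q ^ ((m + 1) * (n + 1)) * (shanksTerm q n m * (1 + q ^ m)) := by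
  induction m with
  | zero => simp; ring
  | succ m ih =>
    rw [sum_range_succ, ih (by omega), shanksTerm_mul_one_add q (by omega)]
    ring

/-- A finite form of Gauss's identity, valid for an element `q` of any commutative ring. -/
lemma shanks_identity (q : R) (n : ℕ) :
    (∏ i ∈ range n, (1 + q ^ (i + 1))) *
        (1 + 2 * ∑ k ∈ range n, (-1) ^ (k + 1) * q ^ ((k + 1) ^ 2)) =
      ∑ s ∈ range (n + 1), (-1) ^ s * q ^ (s * (n + 1)) * shanksTerm q n s := by
  induction n with
  | zero => simp [shanksTerm]
  | succ n ih =>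
    have key : ∑ s ∈ range (n + 1), (-1) ^ s * q ^ (s * (n + 1 + 1)) * shanksTerm q (n + 1) s =
        (1 + q ^ (n + 1)) *
          ∑ s ∈ range (n + 1), (-1) ^ s * q ^ (s * (n + 1)) * shanksTerm q n s +
        (-1) ^ (n + 1) * q ^ ((n + 1) * (n + 1)) * (shanksTerm q n n * (1 + q ^ n)) := by
      rw [← shanks_telescope q n n le_rfl, mul_sum, ← sum_add_distrib]
      refine sum_congr rfl fun s hs ↦ ?_
      rw [shanksTerm_succ_left q (by simp at hs; omega)]
      ring
    have h1 : shanksTerm q n n * (1 + q ^ n) = shanksTerm q (n + 1) (n + 1) := by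
      simp [shanksTerm, prod_range_succ]
    rw [sum_range_succ _ (n + 1), key, ← ih, h1, shanksTerm_self_succ, prod_range_succ,
      sum_range_succ]
    ring

/-- Modulo `q ^ (n + 1)` only the zeroth term of `shanks_identity` survives. -/
lemma exists_prod_mul_eq (q : R) (n : ℕ) :
    ∃ r, (∏ i ∈ range n, (1 + q ^ (i + 1))) *
        (1 + 2 * ∑ k ∈ range n, (-1) ^ (k + 1) * q ^ ((k + 1) ^ 2)) =
      ∏ i ∈ range n, (1 - q ^ (i + 1)) + q ^ (n + 1) * r := by
  refine ⟨∑ s ∈ range n, (-1) ^ (s + 1) * q ^ (s * (n + 1)) * shanksTerm q n (s + 1), ?_⟩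
  rw [shanks_identity, sum_range_succ', mul_sum, add_comm]
  congr 1
  · simp [shanksTerm]
  · exact sum_congr rfl fun s _ ↦ by ring

end Finite

/-! ### Gauss's identity for the generating function -/

/-- The series `∑_{k ≥ 1} (-1)^k X^(k^2)`. In the coefficient at `d` only `k ≤ d` can matter, which
makes the sum finite. -/
noncomputable def sqSeries : ℤ⟦X⟧ :=
  .mk fun d ↦ ∑ k ∈ range d, if d = (k + 1) ^ 2 then (-1) ^ (k + 1) else 0

lemma exists_sq_of_coeff_ne_zero {d : ℕ} (h : coeff d sqSeries ≠ 0) : ∃ a, d = a ^ 2 := by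
  rw [sqSeries, coeff_mk] at h
  obtain ⟨k, -, hk⟩ := exists_ne_zero_of_sum_ne_zero h
  exact ⟨k + 1, by by_contra hd; simp [hd] at hk⟩

lemma tendsto_sqSeries :
    Tendsto (fun n ↦ ∑ k ∈ range n, (-1) ^ (k + 1) * (X : ℤ⟦X⟧) ^ ((k + 1) ^ 2)) atTop
      (nhds sqSeries) := by
  rw [WithPiTopology.tendsto_iff_coeff_tendsto]
  refine fun d ↦ tendsto_atTop_of_eventually_const (i₀ := d) fun n hn ↦ ?_
  have hc (k : ℕ) : coeff d ((-1) ^ (k + 1) * (X : ℤ⟦X⟧) ^ ((k + 1) ^ 2)) =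
      if d = (k + 1) ^ 2 then (-1) ^ (k + 1) else 0 := by
    rw [show ((-1) ^ (k + 1) : ℤ⟦X⟧) = C ((-1) ^ (k + 1)) by simp, coeff_C_mul, coeff_X_pow]
    simp
  rw [map_sum, sqSeries, coeff_mk]
  simp_rw [hc]
  refine (sum_subset (range_subset_range.2 hn) fun k _ hk ↦ if_neg ?_).symm
  have : d ≤ k := by simpa using hk
  nlinarith

/-- The generating function of partitions. -/
noncomputable def partSeries : ℤ⟦X⟧ := .mk fun n ↦ (Fintype.card (Nat.Partition n) : ℤ)

/-- The generating function of partitions into distinct parts. -/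
noncomputable def distSeries : ℤ⟦X⟧ := .mk fun n ↦ ((Nat.Partition.distincts n).card : ℤ)

/-- The generating function of overpartitions. -/
noncomputable def overSeries : ℤ⟦X⟧ := .mk fun n ↦ (overpartition n : ℤ)

lemma overSeries_eq : overSeries = distSeries * partSeries := by
  ext n
  simp [overSeries, distSeries, partSeries, overpartition, coeff_mul,
    Nat.sum_antidiagonal_eq_sum_range_succ_mk]

lemma hasProd_distSeries : HasProd (fun i ↦ (1 : ℤ⟦X⟧) + X ^ (i + 1)) distSeries := by
  have h := Nat.Partition.hasProd_powerSeriesMk_card_countRestricted ℤ (m := 2) two_pos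
  simp only [sum_range_succ, range_zero, sum_empty, mul_zero, pow_zero, zero_add, mul_one,
    Nat.Partition.countRestricted_two] at h
  exact h

lemma partSeries_mul_tprod : partSeries * ∏' i, (1 - (X : ℤ⟦X⟧) ^ (i + 1)) = 1 := by
  have h := Nat.Partition.hasProd_powerSeriesMk_card_restricted ℤ (fun _ ↦ True)
  have h' : HasProd (fun i ↦ ∑' j : ℕ, (X : ℤ⟦X⟧) ^ ((i + 1) * j)) partSeries := by
    simpa [Nat.Partition.restricted, partSeries] using h
  refine ((h'.mul (WithPiTopology.multipliable_one_sub_X_pow ℤ).hasProd).unique ?_)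
  convert! hasProd_one using 2 with i
  simp_rw [pow_mul]
  exact WithPiTopology.tsum_pow_mul_one_sub_of_constantCoeff_eq_zero (by simp)

lemma gauss_identity :
    distSeries * (1 + 2 * sqSeries) = ∏' i, (1 - (X : ℤ⟦X⟧) ^ (i + 1)) := by
  choose r hr using exists_prod_mul_eq (X : ℤ⟦X⟧)
  have h1 := hasProd_distSeries.tendsto_prod_nat.mul
    (tendsto_const_nhds (x := (1 : ℤ⟦X⟧)) |>.add
      (tendsto_const_nhds (x := (2 : ℤ⟦X⟧)) |>.mul tendsto_sqSeries))
  have h2 := (WithPiTopology.multipliable_one_sub_X_pow ℤ).hasProd.tendsto_prod_nat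
  have h3 : Tendsto (fun n ↦ (X : ℤ⟦X⟧) ^ (n + 1) * r n) atTop (nhds 0) := by
    rw [WithPiTopology.tendsto_iff_coeff_tendsto]
    refine fun d ↦ tendsto_atTop_of_eventually_const (i₀ := d) fun n hn ↦ ?_
    rw [coeff_X_pow_mul', if_neg (by omega), map_zero]
  have h4 := h2.add h3
  rw [add_zero] at h4
  exact tendsto_nhds_unique (h1.congr hr) h4

lemma overSeries_mul : overSeries * (1 + 2 * sqSeries) = 1 := by
  rw [overSeries_eq, mul_right_comm, gauss_identity, mul_comm, partSeries_mul_tprod]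

/-! ### Coefficients of the powers of `sqSeries` -/

/-- In the convolution sum for the coefficient of `S^2` the terms at `(i, j)` and `(j, i)` cancel
modulo `2`, leaving only the diagonal term. -/
lemma odd_coeff_sq {m : ℕ} (h : ¬ (2 : ℤ) ∣ coeff m (sqSeries ^ 2)) : ∃ a, m = 2 * a ^ 2 := by
  contrapose! h
  rw [← Nat.cast_two, ← ZMod.intCast_zmod_eq_zero_iff_dvd, sq, coeff_mul, Int.cast_sum]
  refine sum_involution (fun p _ ↦ p.swap) ?_ ?_ ?_ ?_
  · rintro ⟨i, j⟩ -
    rw [Prod.fst_swap, Prod.snd_swap, mul_comm (coeff j sqSeries)]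
    exact CharTwo.add_self_eq_zero _
  · rintro ⟨i, j⟩ hij hne heq
    obtain rfl : j = i := congrArg Prod.fst heq
    have hj : coeff j sqSeries ≠ 0 := fun h0 ↦ hne (by simp [h0])
    obtain ⟨a, rfl⟩ := exists_sq_of_coeff_ne_zero hj
    exact h a (by rw [HasAntidiagonal.mem_antidiagonal] at hij; simp only at hij; omega)
  · simp [add_comm]
  · simp

lemma sq_mod_sixteen (a : ℕ) : a ^ 2 % 16 = 0 ∨ a ^ 2 % 16 = 1 ∨ a ^ 2 % 16 = 4 ∨
    a ^ 2 % 16 = 9 := by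
  have := Nat.mod_lt a (show 16 > 0 by norm_num)
  rw [Nat.pow_mod]
  interval_cases a % 16 <;> simp

lemma coeff_sqSeries (n : ℕ) : coeff (16 * n + 14) sqSeries = 0 := by
  by_contra h
  obtain ⟨a, ha⟩ := exists_sq_of_coeff_ne_zero h
  have := sq_mod_sixteen a
  omega

lemma coeff_sqSeries_sq (n : ℕ) : coeff (16 * n + 14) (sqSeries ^ 2) = 0 := by
  rw [sq, coeff_mul]
  refine sum_eq_zero fun p hp ↦ ?_
  by_contra h
  obtain ⟨a, ha⟩ := exists_sq_of_coeff_ne_zero (left_ne_zero_of_mul h)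
  obtain ⟨b, hb⟩ := exists_sq_of_coeff_ne_zero (right_ne_zero_of_mul h)
  have := sq_mod_sixteen a
  have := sq_mod_sixteen b
  rw [HasAntidiagonal.mem_antidiagonal] at hp
  omega

lemma two_dvd_coeff_sqSeries_cube (n : ℕ) : 2 ∣ coeff (16 * n + 14) (sqSeries ^ 3) := by
  rw [pow_succ, coeff_mul]
  refine dvd_sum fun p hp ↦ ?_
  by_contra h
  obtain ⟨a, ha⟩ := odd_coeff_sq fun h' ↦ h (h'.mul_right _)
  obtain ⟨b, hb⟩ := exists_sq_of_coeff_ne_zero (d := p.2) fun h' ↦ h (by simp [h'])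
  have := sq_mod_sixteen a
  have := sq_mod_sixteen b
  rw [HasAntidiagonal.mem_antidiagonal] at hp
  omega

end Overpartition

open Overpartition PowerSeries in
theorem overpartition_16n_add_14 (n : ℕ) : 16 ∣ overpartition (16 * n + 14) := by
  have hP : overSeries = 1 + C (-2) * sqSeries + C 4 * sqSeries ^ 2 + C (-8) * sqSeries ^ 3 +
      C 16 * (sqSeries ^ 4 * overSeries) := by
    simp only [map_neg, map_ofNat]
    linear_combination (1 - 2 * sqSeries + 4 * sqSeries ^ 2 - 8 * sqSeries ^ 3) * overSeries_mul
  have h := congrArg (coeff (16 * n + 14)) hP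
  simp only [map_add, coeff_C_mul, coeff_sqSeries, coeff_sqSeries_sq, coeff_one] at h
  rw [overSeries, coeff_mk, ← overSeries, if_neg (by omega)] at h
  obtain ⟨c, hc⟩ := two_dvd_coeff_sqSeries_cube n
  rw [hc] at h
  omega
end

section
/- Let ℓ be an odd prime with ℓ ≡ −1 (mod 8) and let r be a positive integer not divisible by ℓ. Then for every nonnegative integer n, the overpartition number satisfies p̄(ℓ²n + rℓ) ≡ 0 (mod 16). -/
open Finset PowerSeries Filter Topology

/-! ### Gauss's identity -/

/-- A finite form of Gauss's identity. When `q` is a formal variable, the last sum is divisible by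
`q ^ (n + 1)`, so it disappears in the limit. -/
lemma gauss_finite {R : Type*} [CommRing R] (q : R) (n : ℕ) :
    (∏ j ∈ range n, (1 + q ^ (j + 1))) *
        (1 + 2 * ∑ i ∈ range n, (-1) ^ (i + 1) * q ^ ((i + 1) ^ 2)) =
      (∏ j ∈ range n, (1 - q ^ (j + 1))) +
        2 * ∑ i ∈ range n, (-1) ^ (i + 1) * q ^ ((i + 1) * (n + 1)) *
          ((∏ j ∈ range i, (1 + q ^ (j + 1))) * ∏ j ∈ Ico (i + 1) n, (1 - q ^ (j + 1))) := by
  induction n with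
  | zero => simp
  | succ n ih =>
    -- The `i`-th summand on the right at `n + 1` is `1 + q ^ (n + 1)` times the one at `n`, plus
    -- the telescoping difference `W (i + 1) - W i`.
    let W : ℕ → R := fun i => (-1) ^ (i + 1) * q ^ ((i + 1) * (n + 1)) *
      ((∏ j ∈ range i, (1 + q ^ (j + 1))) * ∏ j ∈ Ico i n, (1 - q ^ (j + 1)))
    have step : ∀ i ∈ range n,
        (-1) ^ (i + 1) * q ^ ((i + 1) * (n + 1 + 1)) *
          ((∏ j ∈ range i, (1 + q ^ (j + 1))) * ∏ j ∈ Ico (i + 1) (n + 1), (1 - q ^ (j + 1))) =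
        (1 + q ^ (n + 1)) * ((-1) ^ (i + 1) * q ^ ((i + 1) * (n + 1)) *
          ((∏ j ∈ range i, (1 + q ^ (j + 1))) * ∏ j ∈ Ico (i + 1) n, (1 - q ^ (j + 1)))) +
        (W (i + 1) - W i) := by
      intro i hi
      have hi : i < n := mem_range.1 hi
      simp only [W]
      rw [prod_Ico_succ_top (by omega : i + 1 ≤ n), prod_range_succ,
        prod_eq_prod_Ico_succ_bot hi]
      ring
    have hW0 : W 0 = - q ^ (n + 1) * ∏ j ∈ range n, (1 - q ^ (j + 1)) := by
      simp [W]
    have hWn : W n = (-1) ^ (n + 1) * q ^ ((n + 1) ^ 2) * ∏ j ∈ range n, (1 + q ^ (j + 1)) := by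
      simp [W, sq]
    rw [sum_range_succ (n := n) (f := fun i => (-1) ^ (i + 1) * q ^ ((i + 1) * (n + 1 + 1)) *
          ((∏ j ∈ range i, (1 + q ^ (j + 1))) * ∏ j ∈ Ico (i + 1) (n + 1), (1 - q ^ (j + 1)))),
      sum_congr rfl step, sum_add_distrib, ← mul_sum, sum_range_sub, hW0, hWn,
      prod_range_succ, prod_range_succ, sum_range_succ, Ico_self, prod_empty]
    linear_combination (1 + q ^ (n + 1)) * ih

/-- The series `θ = ∑_{k ≥ 1} (-1)^k X^{k²}`. The sign is written as `(-1)^n` at the exponent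
`n = k²`, since `k` and `k²` have the same parity. -/
noncomputable def theta : PowerSeries ℤ :=
  PowerSeries.mk fun n => open Classical in if IsSquare n ∧ n ≠ 0 then (-1) ^ n else 0

lemma coeff_theta_of_ne {n : ℕ} (h : ∀ a, n ≠ a ^ 2) : coeff n theta = 0 := by
  rw [theta, coeff_mk, if_neg]
  rintro ⟨⟨a, ha⟩, -⟩
  exact h a (by rw [ha, sq])

/-- The generating series of the overpartition numbers. -/
noncomputable def overpartitionSeries : PowerSeries ℤ :=
  PowerSeries.mk fun n => (overpartition n : ℤ)

lemma overpartitionSeries_eq_mul : overpartitionSeries =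
    (PowerSeries.mk fun n => (#(Nat.Partition.countRestricted n 2) : ℤ)) *
      PowerSeries.mk fun n => (#(Nat.Partition.restricted n fun _ => True) : ℤ) := by
  ext n
  rw [coeff_mul, overpartitionSeries, coeff_mk, overpartition,
    Nat.sum_antidiagonal_eq_sum_range_succ_mk]
  simp [Nat.Partition.countRestricted_two, Nat.Partition.restricted]

lemma coeff_theta_partial {d n : ℕ} (h : d ≤ n) :
    coeff d (∑ i ∈ range n, (-1) ^ (i + 1) * (X : PowerSeries ℤ) ^ ((i + 1) ^ 2)) =
      coeff d theta := by
  have hterm : ∀ i, coeff d ((-1) ^ (i + 1) * (X : PowerSeries ℤ) ^ ((i + 1) ^ 2)) =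
      if d = (i + 1) ^ 2 then (-1) ^ (i + 1) else 0 := by
    intro i
    have : ((-1) ^ (i + 1) : PowerSeries ℤ) = C ((-1) ^ (i + 1)) := by simp
    rw [this, coeff_C_mul, coeff_X_pow]
    simp
  rw [map_sum]
  simp only [hterm]
  by_cases hd : ∃ a, d = (a + 1) ^ 2
  · obtain ⟨a, rfl⟩ := hd
    rw [sum_eq_single a]
    · rw [if_pos rfl, theta, coeff_mk, if_pos ⟨⟨a + 1, sq _⟩, by positivity⟩]
      rw [sq, pow_mul]
      rcases neg_one_pow_eq_or ℤ (a + 1) with h | h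
      · simp [h]
      · have ho : Odd (a + 1) := by
          by_contra hne
          rw [Nat.not_odd_iff_even] at hne
          rw [hne.neg_one_pow] at h
          norm_num at h
        rw [h, ho.neg_one_pow]
    · intro b _ hb
      rw [if_neg]
      intro hab
      have := Nat.pow_left_injective (n := 2) (by norm_num) hab
      omega
    · intro ha
      exfalso
      apply ha
      rw [mem_range]
      nlinarith
  · push Not at hd
    rw [sum_eq_zero fun i _ => if_neg (hd i), theta, coeff_mk, if_neg]
    rintro ⟨⟨a, ha⟩, h0⟩
    obtain _ | a := a
    · exact h0 (by simpa using ha)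
    · exact hd a (by rw [ha, sq])

open scoped PowerSeries.WithPiTopology in
/-- Gauss's identity `P(q) · ∑_{k ∈ ℤ} (-1)^k q^{k²} = 1`, as a limit of `gauss_finite`. -/
lemma overpartitionSeries_mul_one_add_two_theta :
    overpartitionSeries * (1 + 2 * theta) = 1 := by
  have hD := (Nat.Partition.hasProd_powerSeriesMk_card_countRestricted ℤ
    (m := 2) (by norm_num)).tendsto_prod_nat
  have hQ := (Nat.Partition.hasProd_powerSeriesMk_card_restricted ℤ
    (fun _ => True)).tendsto_prod_nat
  have hD' : ∀ n, (∏ i ∈ range n, ∑ j ∈ range 2, (X : PowerSeries ℤ) ^ ((i + 1) * j)) =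
      ∏ i ∈ range n, (1 + X ^ (i + 1)) := by
    intro n
    simp [sum_range_succ]
  simp only [hD', if_true] at hD hQ
  have hQB : ∀ n, (∏ i ∈ range n, (1 - (X : PowerSeries ℤ) ^ (i + 1))) *
      (∏ i ∈ range n, ∑' j : ℕ, (X : PowerSeries ℤ) ^ ((i + 1) * j)) = 1 := by
    intro n
    rw [← prod_mul_distrib]
    refine prod_eq_one fun i _ => ?_
    simp only [pow_mul]
    exact WithPiTopology.one_sub_mul_tsum_pow_of_constantCoeff_eq_zero (by simp)
  have hF : Tendsto (fun n => 1 + 2 * ∑ i ∈ range n,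
      (-1) ^ (i + 1) * (X : PowerSeries ℤ) ^ ((i + 1) ^ 2)) atTop (𝓝 (1 + 2 * theta)) := by
    refine tendsto_const_nhds.add (tendsto_const_nhds.mul ?_)
    rw [WithPiTopology.tendsto_iff_coeff_tendsto]
    intro d
    exact tendsto_atTop_of_eventually_const fun n (hn : n ≥ d) => coeff_theta_partial hn
  have hlim := (hD.mul hQ).mul hF
  rw [← overpartitionSeries_eq_mul] at hlim
  refine tendsto_nhds_unique hlim ?_
  rw [WithPiTopology.tendsto_iff_coeff_tendsto]
  intro d
  refine tendsto_atTop_of_eventually_const (i₀ := d) fun n (hn : n ≥ d) => ?_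
  have hdvd : (X : PowerSeries ℤ) ^ (n + 1) ∣
      2 * ∑ i ∈ range n, (-1) ^ (i + 1) * X ^ ((i + 1) * (n + 1)) *
          ((∏ j ∈ range i, (1 + X ^ (j + 1))) * ∏ j ∈ Ico (i + 1) n, (1 - X ^ (j + 1))) := by
    refine Dvd.dvd.mul_left (dvd_sum fun i _ => ?_) _
    exact Dvd.dvd.mul_right (Dvd.dvd.mul_left (pow_dvd_pow _ (by nlinarith)) _) _
  obtain ⟨E, hE⟩ := hdvd
  have hfin := gauss_finite (X : PowerSeries ℤ) n
  rw [hE] at hfin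
  rw [mul_right_comm, hfin, add_mul, hQB, mul_assoc, map_add, coeff_X_pow_mul', if_neg (by omega),
    add_zero]

/-! ### Reduction modulo 16 -/

/-- Pairs `(i, j)` and `(j, i)` with `i ≠ j` contribute equally to the coefficient of `θ²`, and the
diagonal contributes only if `m` is twice a square. -/
lemma even_coeff_theta_sq {m : ℕ} (h : ∀ b, m ≠ 2 * b ^ 2) : Even (coeff m (theta ^ 2)) := by
  rw [← ZMod.intCast_eq_zero_iff_even, sq, coeff_mul, Int.cast_sum]
  refine sum_involution (fun p _ => p.swap) ?_ ?_ ?_ ?_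
  · intro p _
    simp only [Prod.fst_swap, Prod.snd_swap, mul_comm (coeff p.2 theta)]
    exact CharTwo.add_self_eq_zero _
  · rintro ⟨i, j⟩ hp hne heq
    simp only [Prod.swap_prod_mk, Prod.mk.injEq] at heq
    obtain rfl := heq.1
    rw [HasAntidiagonal.mem_antidiagonal] at hp
    apply hne
    rw [coeff_theta_of_ne (n := j) fun a ha => h a (by simp only at hp; omega)]
    simp
  · intro p hp
    simpa [add_comm] using hp
  · intro p _
    simp

/-- If `N` is not represented by `a² + b²` or `a² + 2b²`, then `16 ∣ p̄(N)`. -/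
lemma sixteen_dvd_overpartition {N : ℕ} (h1 : ∀ a b, N ≠ a ^ 2 + 1 * b ^ 2)
    (h2 : ∀ a b, N ≠ a ^ 2 + 2 * b ^ 2) : 16 ∣ overpartition N := by
  have hP : overpartitionSeries = 1 - C 2 * theta + C 4 * theta ^ 2 - C 8 * theta ^ 3 +
      C 16 * (overpartitionSeries * theta ^ 4) := by
    have h := overpartitionSeries_mul_one_add_two_theta
    simp only [map_ofNat]
    linear_combination (1 - 2 * theta + 4 * theta ^ 2 - 8 * theta ^ 3) * h
  have hc := congrArg (coeff N) hP
  have c0 : coeff N (1 : PowerSeries ℤ) = 0 := by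
    rw [coeff_one, if_neg]
    simpa using h1 0 0
  have c1 : coeff N theta = 0 := coeff_theta_of_ne fun a => by simpa using h1 a 0
  have c2 : coeff N (theta ^ 2) = 0 := by
    rw [sq, coeff_mul]
    refine sum_eq_zero fun p hp => ?_
    rw [HasAntidiagonal.mem_antidiagonal] at hp
    by_cases ha : ∃ a, p.1 = a ^ 2
    · obtain ⟨a, ha⟩ := ha
      rw [coeff_theta_of_ne (n := p.2) fun b hb => h1 a b (by omega), mul_zero]
    · push Not at ha
      rw [coeff_theta_of_ne ha, zero_mul]
  have c3 : Even (coeff N (theta ^ 3)) := by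
    rw [pow_succ', coeff_mul]
    refine even_sum _ fun p hp => ?_
    rw [HasAntidiagonal.mem_antidiagonal] at hp
    by_cases ha : ∃ a, p.1 = a ^ 2
    · obtain ⟨a, ha⟩ := ha
      exact (even_coeff_theta_sq fun b hb => h2 a b (by omega)).mul_left _
    · push Not at ha
      rw [coeff_theta_of_ne ha, zero_mul]
      exact Even.zero
  obtain ⟨k, hk⟩ := c3
  simp only [map_add, map_sub, coeff_C_mul, c0, c1, c2, hk] at hc
  rw [overpartitionSeries, coeff_mk] at hc
  zify
  rw [hc]
  exact ⟨-k + coeff N (PowerSeries.mk (fun n => (overpartition n : ℤ)) * theta ^ 4), by ring⟩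

/-! ### Quadratic forms -/

/-- If `-d` is not a square modulo `p`, then `p ∣ a² + d b²` forces `p ∣ a` and `p ∣ b`, hence
`p² ∣ a² + d b²`; so the form does not represent numbers divisible by `p` exactly once. -/
lemma ne_sq_add_mul_sq {p d N : ℕ} [Fact p.Prime] (hd : ¬ IsSquare (-(d : ZMod p)))
    (h1 : p ∣ N) (h2 : ¬ p ^ 2 ∣ N) (a b : ℕ) : N ≠ a ^ 2 + d * b ^ 2 := by
  rintro rfl
  have h : (a : ZMod p) ^ 2 + d * (b : ZMod p) ^ 2 = 0 := by
    have := (ZMod.natCast_eq_zero_iff _ p).2 h1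
    push_cast at this
    exact this
  have hb : (b : ZMod p) = 0 := by
    by_contra hb
    refine hd ⟨a / b, ?_⟩
    field_simp
    linear_combination -h
  have ha : (a : ZMod p) = 0 := by simpa [hb] using h
  rw [ZMod.natCast_eq_zero_iff] at ha hb
  exact h2 (dvd_add (pow_dvd_pow_of_dvd ha 2) ((pow_dvd_pow_of_dvd hb 2).mul_left d))

theorem overpartition_ell_sq (ℓ : ℕ) (hℓ : ℓ.Prime) (hodd : Odd ℓ) (hmod : ℓ % 8 = 7)
    (r : ℕ) (hr : 0 < r) (hndvd : ¬ ℓ ∣ r) (n : ℕ) :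
    16 ∣ overpartition (ℓ ^ 2 * n + r * ℓ) := by
  have : Fact ℓ.Prime := ⟨hℓ⟩
  have hdvd : ℓ ∣ ℓ ^ 2 * n + r * ℓ := ⟨ℓ * n + r, by ring⟩
  have hndvd2 : ¬ ℓ ^ 2 ∣ ℓ ^ 2 * n + r * ℓ := by
    rw [Nat.dvd_add_right (Dvd.intro _ rfl), sq]
    exact fun h => hndvd (Nat.dvd_of_mul_dvd_mul_right hℓ.pos h)
  refine sixteen_dvd_overpartition
    (ne_sq_add_mul_sq (p := ℓ) ?_ hdvd hndvd2) (ne_sq_add_mul_sq (p := ℓ) ?_ hdvd hndvd2)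
  · rw [Nat.cast_one, ZMod.exists_sq_eq_neg_one_iff]
    omega
  · rw [Nat.cast_ofNat, ZMod.exists_sq_eq_neg_two_iff (by omega)]
    omega
end

section
/- For every nonnegative integer n, the overpartition number satisfies p̄(4n) ≡ (−1)ⁿ p̄(n) (mod 16). -/
open PowerSeries Finset Filter Topology
open scoped PowerSeries.WithPiTopology

namespace OverpartitionMod16

/-! ### A finite form of Gauss's identity -/

section GaussFinite

variable {R : Type*} [CommRing R] (q : R)

/-- The summand `(-1)ˢ q^(s(n+1)) ∏_{s < i ≤ n} (1 - qⁱ) ∏_{0 ≤ i < s} (1 + qⁱ)` of the finite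
Gauss identity. The factor at `i = 0` of the second product is `2`. -/
def gaussTerm (n s : ℕ) : R :=
  (∏ i ∈ Ioc s n, (1 - q ^ i)) * (∏ i ∈ range s, (1 + q ^ i)) * (-1) ^ s * q ^ (s * (n + 1))

/-- The partial theta sum `∑_{-n ≤ k ≤ n} (-1)ᵏ q^(k²)`. -/
def partialTheta (n : ℕ) : R := 1 + 2 * ∑ k ∈ range n, (-1) ^ (k + 1) * q ^ ((k + 1) ^ 2)

lemma gaussTerm_succ_left {n s : ℕ} (h : s ≤ n) :
    gaussTerm q (n + 1) s = gaussTerm q n s * ((1 - q ^ (n + 1)) * q ^ s) := by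
  unfold gaussTerm
  rw [Finset.prod_Ioc_succ_top h]
  ring

lemma gaussTerm_succ_right {n s : ℕ} (h : s < n) :
    gaussTerm q n (s + 1) * (1 - q ^ (s + 1)) =
      -(gaussTerm q n s * (1 + q ^ s) * q ^ (n + 1)) := by
  unfold gaussTerm
  rw [← prod_Ioc_consecutive _ s.le_succ h, Nat.succ_eq_add_one, prod_Ioc_succ_top le_rfl, Ioc_self,
    prod_empty, prod_range_succ]
  ring

/-- The differences `gaussTerm q (n + 1) s - (1 + q ^ (n + 1)) * gaussTerm q n s` telescope in `s`:
each equals `g (s + 1) - g s` with `g s = gaussTerm q n s * (1 - q ^ s)`, where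
`gaussTerm_succ_right` rewrites `g (s + 1)` in terms of `gaussTerm q n s`; for `s = n` that
expression serves as the definition of `g (n + 1)`. -/
lemma sum_gaussTerm_telescope {n m : ℕ} (h : m ≤ n) :
    ∑ s ∈ range (m + 1), gaussTerm q (n + 1) s =
      (1 + q ^ (n + 1)) * ∑ s ∈ range (m + 1), gaussTerm q n s -
        gaussTerm q n m * (1 + q ^ m) * q ^ (n + 1) := by
  induction m with
  | zero =>
    simp only [zero_add, sum_range_one, gaussTerm_succ_left q h]
    ring
  | succ m ih =>
    rw [sum_range_succ, ih (by omega), sum_range_succ _ (m + 1), gaussTerm_succ_left q h]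
    linear_combination -gaussTerm_succ_right q (Nat.lt_of_succ_le h)

/-- The finite Gauss identity: dividing by `∏ (1 + q ^ (i + 1))` exhibits the partial theta sum as
the quotient `∏ (1 - qⁱ) / ∏ (1 + qⁱ)` (the term `s = 0`) plus terms of order beyond `n`. -/
lemma sum_gaussTerm (n : ℕ) :
    ∑ s ∈ range (n + 1), gaussTerm q n s =
      (∏ i ∈ range n, (1 + q ^ (i + 1))) * partialTheta q n := by
  induction n with
  | zero => simp [gaussTerm, partialTheta]
  | succ n ih =>
    have h1 : ∏ i ∈ range (n + 1), (1 + q ^ i) = 2 * ∏ i ∈ range n, (1 + q ^ (i + 1)) := by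
      rw [prod_range_succ']; ring
    have h2 : gaussTerm q n n * (1 + q ^ n) =
        2 * (∏ i ∈ range n, (1 + q ^ (i + 1))) * (-1) ^ n * q ^ (n * (n + 1)) := by
      rw [← h1, prod_range_succ]; simp [gaussTerm]; ring
    have h3 : gaussTerm q (n + 1) (n + 1) =
        2 * (∏ i ∈ range n, (1 + q ^ (i + 1))) * (-1) ^ (n + 1) * q ^ ((n + 1) * (n + 2)) := by
      simp [gaussTerm, h1]
    rw [sum_range_succ, sum_gaussTerm_telescope q le_rfl, ih, h2, h3, prod_range_succ]
    unfold partialTheta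
    rw [sum_range_succ]
    ring

lemma prod_sub_dvd (n : ℕ) :
    q ^ (n + 1) ∣ (∏ i ∈ range n, (1 + q ^ (i + 1))) * partialTheta q n -
      ∏ i ∈ range n, (1 - q ^ (i + 1)) := by
  have h0 : gaussTerm q n 0 = ∏ i ∈ range n, (1 - q ^ (i + 1)) := by
    rw [range_eq_Ico, prod_Ico_add' (fun i ↦ 1 - q ^ i)]
    simp [gaussTerm]
    rfl
  rw [← sum_gaussTerm, sum_range_succ', h0, add_sub_cancel_right]
  refine dvd_sum fun s _ ↦ ?_
  unfold gaussTerm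
  exact dvd_mul_of_dvd_right (pow_dvd_pow _ (by nlinarith)) _

end GaussFinite

/-! ### Theta series and the limit of the finite identity -/

/-- The number of integers `k` with `k² = n`; the bound `|k| ≤ n` loses nothing. -/
noncomputable def sqCount (n : ℕ) : ℤ := #((Icc (-n : ℤ) n).filter fun k : ℤ ↦ k ^ 2 = n)

/-- Ramanujan's theta series `φ(q) = ∑_{k ∈ ℤ} q^(k²)`. -/
noncomputable def φ : ℤ⟦X⟧ := mk sqCount

/-- The series `φ(-q) = ∑_{k ∈ ℤ} (-1)ᵏ q^(k²)` (not Ramanujan's `ψ`). -/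
noncomputable def ψ : ℤ⟦X⟧ := rescale (-1) φ

lemma sqCount_zero : sqCount 0 = 1 := by decide

lemma sqCount_sq {m : ℕ} (hm : m ≠ 0) : sqCount (m ^ 2) = 2 := by
  have : (Icc (-(m ^ 2 : ℕ) : ℤ) (m ^ 2 : ℕ)).filter (fun k : ℤ ↦ k ^ 2 = (m ^ 2 : ℕ)) =
      {(m : ℤ), -(m : ℤ)} := by
    ext k
    simp only [mem_filter, mem_Icc, mem_insert, mem_singleton]
    push_cast
    rw [sq_eq_sq_iff_eq_or_eq_neg]
    constructor
    · exact fun h ↦ h.2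
    · intro h
      refine ⟨?_, h⟩
      have : (1 : ℤ) ≤ m := by omega
      rcases h with rfl | rfl <;> constructor <;> nlinarith
  rw [sqCount, this, card_pair (by omega)]
  rfl

lemma sqCount_of_not {n : ℕ} (hn : ∀ m, n ≠ m ^ 2) : sqCount n = 0 := by
  rw [sqCount, card_eq_zero.2, Nat.cast_zero]
  refine filter_eq_empty_iff.2 fun k _ hk ↦ hn k.natAbs ?_
  zify; simp [hk]

lemma coeff_partialTheta {n d : ℕ} (h : d ≤ n) :
    coeff d (partialTheta (X : ℤ⟦X⟧) n) = coeff d ψ := by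
  have key : coeff d (partialTheta (X : ℤ⟦X⟧) n) = (if d = 0 then 1 else 0) +
      2 * ∑ k ∈ range n, (if d = (k + 1) ^ 2 then (-1) ^ (k + 1) else 0) := by
    have (k : ℕ) : ((-1) ^ (k + 1) * X ^ ((k + 1) ^ 2) : ℤ⟦X⟧) =
        C ((-1) ^ (k + 1)) * X ^ ((k + 1) ^ 2) := by simp
    have h2 : (2 : ℤ⟦X⟧) = C 2 := by simp
    unfold partialTheta
    simp_rw [this, h2]
    rw [map_add, coeff_C_mul, map_sum, coeff_one]
    simp_rw [coeff_C_mul, coeff_X_pow]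
    simp
  rw [key, ψ, coeff_rescale, φ, coeff_mk]
  by_cases hd : ∃ m, d = m ^ 2
  · obtain ⟨m, rfl⟩ := hd
    rcases m with _ | m
    · simp [sqCount_zero, eq_comm (a := 0)]
    · rw [sqCount_sq (by omega), sum_eq_single m]
      · have : (-1 : ℤ) ^ ((m + 1) ^ 2) = (-1) ^ (m + 1) := by
          rw [sq, pow_mul]
          rcases Nat.even_or_odd (m + 1) with h | h <;> simp [h.neg_one_pow]
        simp [this, mul_comm]
      · intro k _ hk
        rw [if_neg]
        intro h
        have := Nat.pow_left_injective (n := 2) (by norm_num) h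
        omega
      · intro hm
        exact absurd (mem_range.2 (by nlinarith)) hm
  · push Not at hd
    rw [sqCount_of_not hd, if_neg (by simpa using hd 0), sum_eq_zero]
    · simp
    · intro k _
      rw [if_neg (hd _)]

lemma tendsto_partialTheta :
    Tendsto (fun n ↦ partialTheta (X : ℤ⟦X⟧) n) atTop (𝓝 ψ) := by
  rw [WithPiTopology.tendsto_iff_coeff_tendsto]
  exact fun d ↦ tendsto_atTop_of_eventually_const fun n (hn : n ≥ d) ↦ coeff_partialTheta hn

/-- The generating function of overpartitions. -/
noncomputable def P : ℤ⟦X⟧ := mk fun n ↦ (overpartition n : ℤ)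

/-- The generating function of partitions into distinct parts. -/
noncomputable def distinctSeries : ℤ⟦X⟧ := mk fun n ↦ (#(Nat.Partition.distincts n) : ℤ)

/-- The generating function of partitions. -/
noncomputable def partitionSeries : ℤ⟦X⟧ := mk fun n ↦ (Fintype.card (Nat.Partition n) : ℤ)

lemma P_eq : P = distinctSeries * partitionSeries := by
  ext n
  rw [coeff_mul, Finset.Nat.sum_antidiagonal_eq_sum_range_succ_mk]
  simp [P, distinctSeries, partitionSeries, overpartition]

lemma hasProd_distinctSeries :
    HasProd (fun i ↦ (1 + X ^ (i + 1) : ℤ⟦X⟧)) distinctSeries := by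
  have h := Nat.Partition.hasProd_powerSeriesMk_card_countRestricted ℤ two_pos
  simp only [Nat.Partition.countRestricted_two] at h
  have e : (fun i ↦ (1 + X ^ (i + 1) : ℤ⟦X⟧)) = fun i ↦ ∑ j ∈ range 2, X ^ ((i + 1) * j) := by
    ext1 i
    simp [sum_range_succ]
  rw [e]
  exact h

lemma hasProd_partitionSeries :
    HasProd (fun i ↦ ∑' j : ℕ, (X ^ ((i + 1) * j) : ℤ⟦X⟧)) partitionSeries := by
  have h := Nat.Partition.hasProd_powerSeriesMk_card_restricted ℤ (fun _ ↦ True)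
  simp only [if_true, Nat.Partition.restricted, implies_true, filter_true, card_univ] at h
  exact h

/-- Gauss's identity `φ(-q) = ∏ (1 - qⁱ) / (1 + qⁱ)`, stated as `φ(-q) P(q) = 1`. -/
lemma ψ_mul_P : ψ * P = 1 := by
  obtain ⟨Q, hQ⟩ := WithPiTopology.multipliable_one_sub_X_pow ℤ
  have hBQ : partitionSeries * Q = 1 := by
    refine (hasProd_partitionSeries.mul hQ).unique ?_
    convert! hasProd_one using 1
    ext1 i
    simp_rw [pow_mul]
    exact WithPiTopology.tsum_pow_mul_one_sub_of_constantCoeff_eq_zero (by simp)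
  have hlim : Tendsto (fun n ↦ (∏ i ∈ range n, (1 + X ^ (i + 1) : ℤ⟦X⟧)) * partialTheta X n -
      ∏ i ∈ range n, (1 - X ^ (i + 1))) atTop (𝓝 (distinctSeries * ψ - Q)) :=
    (hasProd_distinctSeries.tendsto_prod_nat.mul tendsto_partialTheta).sub hQ.tendsto_prod_nat
  have hlim0 : Tendsto (fun n ↦ (∏ i ∈ range n, (1 + X ^ (i + 1) : ℤ⟦X⟧)) * partialTheta X n -
      ∏ i ∈ range n, (1 - X ^ (i + 1))) atTop (𝓝 0) := by
    rw [WithPiTopology.tendsto_iff_coeff_tendsto]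
    refine fun d ↦ tendsto_atTop_of_eventually_const (i₀ := d) fun n hn ↦ ?_
    rw [X_pow_dvd_iff.1 (prod_sub_dvd X n) d (by omega), map_zero]
  have hA : distinctSeries * ψ = Q := sub_eq_zero.1 (tendsto_nhds_unique hlim hlim0)
  rw [P_eq]
  linear_combination partitionSeries * hA + hBQ

/-! ### Sums of two squares and dissections -/

/-- The integer solutions of `x² + y² = N`; the bounds `|x|, |y| ≤ N` only serve finiteness. -/
noncomputable def sols (N : ℕ) : Finset (ℤ × ℤ) :=
  (Icc (-N : ℤ) N ×ˢ Icc (-N : ℤ) N).filter fun p : ℤ × ℤ ↦ p.1 ^ 2 + p.2 ^ 2 = N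

lemma mem_sols {N : ℕ} {p : ℤ × ℤ} : p ∈ sols N ↔ p.1 ^ 2 + p.2 ^ 2 = N := by
  simp only [sols, mem_filter, mem_product, mem_Icc, and_iff_right_iff_imp]
  intro h
  have h1 := sq_nonneg p.1
  have h2 := sq_nonneg p.2
  have h3 := Int.le_self_sq p.1
  have h4 := Int.le_self_sq (-p.1)
  have h5 := Int.le_self_sq p.2
  have h6 := Int.le_self_sq (-p.2)
  rw [neg_sq] at h4 h6
  refine ⟨⟨?_, ?_⟩, ?_, ?_⟩ <;> linarith

/-- The coefficients of `φ(εq) φ(q)` count representations as a sum of two squares, each weighted by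
`ε` to the power of its first square. -/
lemma coeff_rescale_mul (ε : ℤ) (N : ℕ) :
    coeff N (rescale ε φ * φ) =
      ∑ p ∈ sols N, ε ^ (p.1.natAbs ^ 2) := by
  have hs (i : ℕ) (hi : i ≤ N) :
      sqCount i = ∑ k ∈ Icc (-N : ℤ) N, if k ^ 2 = i then 1 else 0 := by
    rw [sum_boole, sqCount]
    congr 2
    ext k
    simp only [mem_filter, mem_Icc]
    refine and_congr_left fun h ↦ ?_
    constructor
    · omega
    · intro
      rw [← h]
      constructor <;> nlinarith [sq_nonneg k, Int.le_self_sq k, Int.le_self_sq (-k)]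
  rw [coeff_mul, sols, sum_filter, sum_product]
  have : ∀ ij ∈ antidiagonal N, coeff ij.1 (rescale ε φ) * coeff ij.2 φ =
      ∑ k ∈ Icc (-N : ℤ) N, ∑ l ∈ Icc (-N : ℤ) N,
        if k ^ 2 = ij.1 ∧ l ^ 2 = ij.2 then ε ^ (k.natAbs ^ 2) else 0 := by
    intro ij hij
    rw [HasAntidiagonal.mem_antidiagonal] at hij
    rw [coeff_rescale, φ, coeff_mk, coeff_mk, hs _ (by omega), hs _ (by omega), mul_assoc,
      sum_mul_sum, mul_sum]
    refine sum_congr rfl fun k _ ↦ ?_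
    rw [mul_sum]
    refine sum_congr rfl fun l _ ↦ ?_
    by_cases h1 : k ^ 2 = ij.1
    · have : ij.1 = k.natAbs ^ 2 := by zify; simp [h1]
      by_cases h2 : l ^ 2 = ij.2 <;> simp [h1, h2, ← this]
    · simp [h1]
  rw [sum_congr rfl this, sum_comm]
  refine sum_congr rfl fun k _ ↦ ?_
  rw [sum_comm]
  refine sum_congr rfl fun l _ ↦ ?_
  by_cases h : k ^ 2 + l ^ 2 = N
  · rw [if_pos h, sum_eq_single (k.natAbs ^ 2, l.natAbs ^ 2)]
    · simp
    · rintro ⟨i, j⟩ _ hne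
      rw [if_neg]
      rintro ⟨h1, h2⟩
      apply hne
      ext <;> zify <;> simp_all
    · intro hm
      exfalso; apply hm
      rw [HasAntidiagonal.mem_antidiagonal]; zify; simpa using h
  · rw [if_neg h]
    refine sum_eq_zero fun ij hij ↦ if_neg ?_
    rintro ⟨h1, h2⟩
    rw [HasAntidiagonal.mem_antidiagonal] at hij
    apply h
    rw [h1, h2]; exact_mod_cast hij

/-- For `ε = ±1`, the map `(u, v) ↦ (u + v, u - v)` is a bijection from the solutions of
`u² + v² = M` onto those of `x² + y² = 2M`, and `(u + v)²` has the parity of `M`. -/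
lemma coeff_two_mul {ε : ℤ} (hε : ε ^ 2 = 1) (M : ℕ) :
    coeff (2 * M) (rescale ε φ * φ) = ε ^ M * coeff M (φ * φ) := by
  have h1 : φ * φ = rescale 1 φ * φ := by simp
  rw [h1, coeff_rescale_mul, coeff_rescale_mul, mul_sum]
  symm
  refine sum_bij (fun p _ ↦ (p.1 + p.2, p.1 - p.2)) ?_ ?_ ?_ ?_
  · intro p hp
    rw [mem_sols] at hp ⊢
    push_cast
    rw [← hp]; ring
  · rintro ⟨a, b⟩ _ ⟨c, d⟩ _ h
    simp only [Prod.mk.injEq] at h ⊢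
    omega
  · rintro ⟨k, l⟩ hp
    rw [mem_sols] at hp
    have hpar : Even (k + l) := by
      have : Even (k ^ 2 + l ^ 2) := by rw [hp]; simp
      simpa [Int.even_add, Int.even_pow] using this
    obtain ⟨u, hu⟩ := hpar
    refine ⟨(u, k - u), ?_, ?_⟩
    · rw [mem_sols]
      obtain rfl : l = 2 * u - k := by omega
      push_cast at hp
      simp only at hp ⊢
      linarith
    · ext <;> simp; omega
  · rintro ⟨u, v⟩ hp
    rw [mem_sols] at hp
    have hpar : M % 2 = ((u + v).natAbs ^ 2) % 2 := by
      zify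
      rw [sq_abs, ← hp, show (u + v) ^ 2 = u ^ 2 + v ^ 2 + 2 * (u * v) by ring]
      simp
    simp only [one_pow, mul_one]
    rw [← Nat.div_add_mod M 2, ← Nat.div_add_mod ((u + v).natAbs ^ 2) 2, ← hpar]
    simp only [pow_add, pow_mul, hε, one_pow]

/-- The section `∑ aₙ qⁿ ↦ ∑ a₂ₙ qⁿ` extracting the even exponents. -/
noncomputable def sect (f : ℤ⟦X⟧) : ℤ⟦X⟧ := mk fun n ↦ coeff (2 * n) f

lemma sect_mul_expand (f g : ℤ⟦X⟧) :
    sect (f * expand 2 two_ne_zero g) = sect f * g := by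
  ext n
  rw [sect, coeff_mk, coeff_mul, coeff_mul]
  symm
  refine sum_of_injOn (fun p ↦ (2 * p.1, 2 * p.2)) ?_ ?_ ?_ ?_
  · rintro ⟨a, b⟩ _ ⟨c, d⟩ _ h
    simp only [Prod.mk.injEq] at h ⊢
    omega
  · rintro ⟨a, b⟩ h
    simp only [mem_coe, HasAntidiagonal.mem_antidiagonal] at h ⊢
    omega
  · rintro ⟨a, b⟩ h h'
    rw [HasAntidiagonal.mem_antidiagonal] at h
    rw [coeff_expand_of_not_dvd, mul_zero]
    change a + b = 2 * n at h
    rintro ⟨c, rfl⟩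
    apply h'
    refine ⟨(n - c, c), ?_, ?_⟩
    · simp only [mem_coe, HasAntidiagonal.mem_antidiagonal]; omega
    · simp only [Prod.mk.injEq, and_true]; omega
  · rintro ⟨a, b⟩ _
    simp [sect, coeff_expand_mul]

lemma sect_expand_mul (f g : ℤ⟦X⟧) :
    sect (expand 2 two_ne_zero f * g) = f * sect g := by
  rw [mul_comm, sect_mul_expand, mul_comm]

lemma rescale_ψ : rescale (-1) ψ = φ := by
  rw [ψ, rescale_rescale]; simp

/-- The identity `φ(q) φ(-q) = φ(-q²)²`. -/
lemma φ_mul_ψ : φ * ψ = expand 2 two_ne_zero (ψ ^ 2) := by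
  ext N
  rcases Nat.even_or_odd' N with ⟨M, rfl | rfl⟩
  · rw [coeff_expand_mul, mul_comm φ, ψ, coeff_two_mul (by norm_num), ← map_pow, coeff_rescale, sq φ]
  · rw [coeff_expand_of_not_dvd _ _ _ (by omega)]
    -- The product is invariant under `q ↦ -q`, so its odd coefficients vanish.
    have h : rescale (-1) (φ * ψ) = φ * ψ := by
      rw [map_mul, rescale_ψ, mul_comm]; rfl
    have h' := congrArg (coeff (2 * M + 1)) h
    rw [coeff_rescale, Odd.neg_one_pow ⟨M, rfl⟩] at h'
    linarith

/-- The even part of `φ(q)²` is `φ(q²)²`. -/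
lemma sect_φ_mul_φ : sect (φ * φ) = φ * φ := by
  ext n
  have := coeff_two_mul (ε := 1) (by norm_num) n
  simpa [sect] using this

/-- The even part of `φ(q)` is `φ(q⁴)`. -/
lemma sect_φ : sect φ = expand 2 two_ne_zero φ := by
  ext n
  rw [sect, coeff_mk]
  rcases Nat.even_or_odd' n with ⟨m, rfl | rfl⟩
  · rw [coeff_expand_mul, φ, coeff_mk, coeff_mk]
    by_cases hm : ∃ a, m = a ^ 2
    · obtain ⟨a, rfl⟩ := hm
      rw [show 2 * (2 * a ^ 2) = (2 * a) ^ 2 by ring]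
      rcases eq_or_ne a 0 with rfl | ha
      · rfl
      · rw [sqCount_sq ha, sqCount_sq (by omega)]
    · push Not at hm
      rw [sqCount_of_not hm, sqCount_of_not]
      intro b hb
      have hev : Even b := by
        have : Even (b ^ 2) := by rw [← hb]; simp
        simpa [Nat.even_pow] using this
      obtain ⟨c, rfl⟩ := hev
      exact hm c (by linarith)
  · rw [coeff_expand_of_not_dvd _ _ _ (by omega), φ, coeff_mk, sqCount_of_not]
    intro b hb
    have hev : Even b := by
      have : Even (b ^ 2) := by rw [← hb]; simp
      simpa [Nat.even_pow] using this
    obtain ⟨c, rfl⟩ := hev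
    have : 2 * m + 1 = 2 * c ^ 2 := by linarith
    omega

/-- The dissection `P(q) = φ(q) P(q²)²`. -/
lemma P_dissection : P = φ * expand 2 two_ne_zero (P ^ 2) := by
  have h : expand 2 two_ne_zero (ψ ^ 2) * expand 2 two_ne_zero (P ^ 2) = 1 := by
    rw [← map_mul, ← mul_pow, ψ_mul_P, one_pow, map_one]
  rw [← φ_mul_ψ] at h
  linear_combination (-P) * h + (φ * expand 2 two_ne_zero (P ^ 2)) * ψ_mul_P

/-- The generating function identity `∑ p̄(4n) qⁿ = φ(q)³ P(q)⁴`. -/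
lemma sect_sect_P : sect (sect P) = φ ^ 3 * P ^ 4 := by
  have h1 : sect P = expand 2 two_ne_zero φ * P ^ 2 := by
    conv_lhs => rw [P_dissection, sect_mul_expand, sect_φ]
  have h2 : P ^ 2 = φ * φ * expand 2 two_ne_zero (P ^ 4) := by
    conv_lhs => rw [P_dissection]
    rw [mul_pow, ← map_pow, ← pow_mul]
    ring
  rw [h1, sect_expand_mul, h2, sect_mul_expand, sect_φ_mul_φ]
  ring

/-! ### The congruence modulo 16 -/

lemma exists_φ_pow_four_sub : ∃ W, φ ^ 4 - ψ ^ 4 = 16 * W := by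
  obtain ⟨S, hS⟩ : ∃ S : ℤ⟦X⟧, φ = 1 + 2 * S := by
    refine ⟨mk fun n ↦ if n = 0 then 0 else sqCount n / 2, ?_⟩
    ext n
    rw [show (2 : ℤ⟦X⟧) = C 2 by simp, map_add, coeff_C_mul, coeff_one, φ, coeff_mk, coeff_mk]
    by_cases hn : ∃ a, n = a ^ 2
    · obtain ⟨a, rfl⟩ := hn
      rcases eq_or_ne a 0 with rfl | ha
      · simp [sqCount_zero]
      · simp [ha, sqCount_sq ha]
    · push Not at hn
      have : n ≠ 0 := by simpa using hn 0
      simp [this, sqCount_of_not hn]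
  -- `b` is the odd part of `S`.
  obtain ⟨b, hb⟩ : ∃ b : ℤ⟦X⟧, S - rescale (-1) S = 2 * b := by
    refine ⟨mk fun n ↦ if Odd n then coeff n S else 0, ?_⟩
    ext n
    rw [show (2 : ℤ⟦X⟧) = C 2 by simp, map_sub, coeff_C_mul, coeff_rescale, coeff_mk]
    rcases Nat.even_or_odd n with h | h
    · simp [h.neg_one_pow, Nat.not_odd_iff_even.2 h]
    · rw [h.neg_one_pow, if_pos h]; ring
  have hψ : ψ = 1 + 2 * (S - 2 * b) := by
    rw [ψ, hS, map_add, map_mul, map_one, map_ofNat]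
    linear_combination -2 * hb
  -- With `S' = S - 2b`: `φ - ψ = 4b`, `φ + ψ = 2(1 + S + S')`,
  -- `φ² + ψ² = 2(1 + 2S + 2S' + 2S² + 2S'²)`.
  refine ⟨b * (1 + S + (S - 2 * b)) *
    (1 + 2 * S + 2 * (S - 2 * b) + 2 * S ^ 2 + 2 * (S - 2 * b) ^ 2), ?_⟩
  rw [hψ, hS]
  ring

end OverpartitionMod16

theorem overpartition_four_mul_mod_16 (n : ℕ) :
    (overpartition (4 * n) : ℤ) ≡ (-1) ^ n * (overpartition n : ℤ) [ZMOD 16] := by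
  open OverpartitionMod16 in
  have hP' : φ * rescale (-1) P = 1 := by
    rw [← rescale_ψ, ← map_mul, ψ_mul_P, map_one]
  obtain ⟨W, hW⟩ := exists_φ_pow_four_sub
  have hψP : ψ ^ 4 * P ^ 4 = 1 := by rw [← mul_pow, ψ_mul_P, one_pow]
  have key : sect (sect P) - rescale (-1) P = C 16 * (W * rescale (-1) P * P ^ 4) := by
    rw [sect_sect_P, show (C 16 : ℤ⟦X⟧) = 16 by simp]
    linear_combination (rescale (-1) P * P ^ 4) * hW - (φ ^ 3 * P ^ 4) * hP' +
      (rescale (-1) P) * hψP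
  have hc := congrArg (coeff n) key
  rw [map_sub, coeff_C_mul, coeff_rescale] at hc
  simp only [sect, P, coeff_mk] at hc
  rw [← mul_assoc] at hc
  exact (Int.modEq_iff_dvd.2 ⟨_, hc⟩).symm
end

section
/- If the nonnegative integer n is not the square of an odd positive integer, then the overpartition number satisfies p̄(4n) ≡ (−1)ⁿ p̄(n) (mod 32). -/
/-! ### A finite form of Gauss' identity -/

section Shanks
variable {R : Type*} [CommRing R] (q : R) (u w : ℕ → R)

/-- `∏_{i=1}^n (1 + q^i) / (1 - q^i)`, where `w i` plays the role of `1 / (1 - q^(i+1))`. -/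
def prodInv (n : ℕ) : R := ∏ i ∈ Finset.range n, (1 + q ^ (i + 1)) * w i

/-- `∏_{i=1}^n (1 - q^i) / (1 + q^i)`, where `u i` plays the role of `1 / (1 + q^(i+1))`. -/
def prodFin (n : ℕ) : R := ∏ i ∈ Finset.range n, (1 - q ^ (i + 1)) * u i

/-- With `P_n` the product `prodFin`, the term `2 (-1)^k (P_n / P_k) q^(k(n+1)) / (1 + q^k)` of index
`k = s + 1` in the finite identity `shanks`. -/
def shanksTerm (n s : ℕ) : R :=
  2 * (-1) ^ (s + 1) * prodFin q u n * prodInv q w (s + 1) * q ^ ((s + 1) * (n + 1)) * u s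

variable {q u w}

/-- The increments in `n` of the terms of `shanks` telescope as the number of terms grows. -/
theorem shanks_telescope (hu : ∀ i, (1 + q ^ (i + 1)) * u i = 1)
    (hw : ∀ i, (1 - q ^ (i + 1)) * w i = 1) (n m : ℕ) :
    prodFin q u (n + 1) - prodFin q u n
      + ∑ s ∈ Finset.range m, (shanksTerm q u w (n + 1) s - shanksTerm q u w n s)
      = -2 * u n * (-1) ^ m * prodFin q u n * prodInv q w m * q ^ ((m + 1) * (n + 1)) := by
  induction m with
  | zero =>
    simp only [Finset.sum_range_zero, prodFin, Finset.prod_range_succ, prodInv,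
      Finset.prod_range_zero, pow_zero, zero_add, one_mul]
    linear_combination (∏ i ∈ Finset.range n, (1 - q ^ (i + 1)) * u i) * hu n
  | succ m ih =>
    rw [Finset.sum_range_succ, ← add_assoc, ih]
    have hF : prodFin q u (n + 1) = prodFin q u n * ((1 - q ^ (n + 1)) * u n) :=
      Finset.prod_range_succ _ _
    have hI : prodInv q w (m + 1) = prodInv q w m * ((1 + q ^ (m + 1)) * w m) :=
      Finset.prod_range_succ _ _
    have e1 : q ^ ((m + 1) * (n + 1 + 1)) = q ^ ((m + 1) * (n + 1)) * q ^ (m + 1) := by ring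
    have e2 : q ^ ((m + 1 + 1) * (n + 1)) = q ^ ((m + 1) * (n + 1)) * q ^ (n + 1) := by ring
    have e3 : (-1 : R) ^ (m + 1) = - (-1) ^ m := by ring
    simp only [shanksTerm, hF, hI, e1, e2, e3]
    have h1 := hu m
    have h2 := hw m
    have h3 := hu n
    -- Only the three inverse relations matter from here on.
    generalize q ^ ((m + 1) * (n + 1)) = y at *
    generalize q ^ (m + 1) = a at *
    generalize q ^ (n + 1) = b at *
    generalize (-1 : R) ^ m = ε
    generalize prodFin q u n = P
    generalize prodInv q w m = I
    generalize u m = u₀ at *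
    generalize w m = w₀ at *
    generalize u n = v at *
    linear_combination (-2 * ε * P * I * y * w₀ * ((1 - b) * v * a - 1)) * h1
      - 2 * ε * P * I * y * w₀ * h3 + 2 * ε * P * I * y * v * h2

theorem prodFin_mul_prodInv (hu : ∀ i, (1 + q ^ (i + 1)) * u i = 1)
    (hw : ∀ i, (1 - q ^ (i + 1)) * w i = 1) (n : ℕ) :
    prodFin q u n * prodInv q w n = 1 := by
  rw [prodFin, prodInv, ← Finset.prod_mul_distrib]
  refine Finset.prod_eq_one fun i _ => ?_
  linear_combination (1 - q ^ (i + 1)) * w i * hu i + hw i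

/-- The right-hand side is `prodFin` up to a multiple of `q^(n+1)`. -/
theorem shanks (hu : ∀ i, (1 + q ^ (i + 1)) * u i = 1)
    (hw : ∀ i, (1 - q ^ (i + 1)) * w i = 1) (n : ℕ) :
    1 + 2 * ∑ j ∈ Finset.range n, (-1) ^ (j + 1) * q ^ ((j + 1) ^ 2)
      = prodFin q u n + ∑ s ∈ Finset.range n, shanksTerm q u w n s := by
  induction n with
  | zero => simp [prodFin]
  | succ n ih =>
    have ht := shanks_telescope hu hw n n
    rw [Finset.sum_sub_distrib] at ht
    have h1 := prodFin_mul_prodInv hu hw n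
    have h2 := prodFin_mul_prodInv hu hw (n + 1)
    have h3 := hu n
    rw [Finset.sum_range_succ, Finset.sum_range_succ, mul_add, ← add_assoc, ih]
    have e : shanksTerm q u w (n + 1) n
      = 2 * (-1) ^ (n + 1) * q ^ ((n + 1) ^ 2) * q ^ (n + 1) * u n := by
      rw [shanksTerm]
      linear_combination 2 * (-1) ^ (n + 1) * q ^ ((n + 1) * (n + 1 + 1)) * u n * h2
    rw [e]
    linear_combination -ht - 2 * (-1) ^ (n + 1) * q ^ ((n + 1) ^ 2) * h3
      + 2 * u n * (-1) ^ n * q ^ ((n + 1) * (n + 1)) * h1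

/-- The partial sums of `∑ (-1)^m q^(m²)` over the integers are `q`-adically close to the inverses
of the partial products of the overpartition generating function. -/
theorem shanks_dvd (hu : ∀ i, (1 + q ^ (i + 1)) * u i = 1)
    (hw : ∀ i, (1 - q ^ (i + 1)) * w i = 1) (n : ℕ) :
    q ^ n ∣ prodInv q w n *
      (1 + 2 * ∑ j ∈ Finset.range n, (-1) ^ (j + 1) * q ^ ((j + 1) ^ 2)) - 1 := by
  rw [shanks hu hw, mul_add, mul_comm, prodFin_mul_prodInv hu hw, add_sub_cancel_left]
  refine Dvd.dvd.mul_left (Finset.dvd_sum fun s _ => ?_) _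
  rw [shanksTerm]
  refine Dvd.dvd.mul_right (Dvd.dvd.mul_left (pow_dvd_pow _ ?_) _) _
  nlinarith [Nat.zero_le (s * (n + 1))]

end Shanks

/-! ### Gauss' identity for overpartitions -/

section GenFun
open PowerSeries
open scoped PowerSeries.WithPiTopology

theorem hasProd_distincts :
    HasProd (fun i : ℕ => (1 + X ^ (i + 1) : ℤ⟦X⟧))
      (PowerSeries.mk fun n => ((Nat.Partition.distincts n).card : ℤ)) := by
  have h := Nat.Partition.hasProd_powerSeriesMk_card_countRestricted ℤ (m := 2) (by norm_num)
  simpa [Finset.sum_range_succ, Nat.Partition.countRestricted_two] using h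

theorem hasProd_partitions :
    HasProd (fun i : ℕ => (∑' j : ℕ, (X ^ (i + 1)) ^ j : ℤ⟦X⟧))
      (PowerSeries.mk fun n => (Fintype.card (Nat.Partition n) : ℤ)) := by
  have h := Nat.Partition.hasProd_powerSeriesMk_card_restricted ℤ (fun _ => True)
  simpa [Nat.Partition.restricted, pow_mul] using h

/-- The series `∑ X^(m²)` over positive integers `m`. -/
noncomputable def sqSeries : ℤ⟦X⟧ :=
  open Classical in PowerSeries.mk fun n => if ∃ m : ℕ, 0 < m ∧ n = m ^ 2 then 1 else 0

/-- Replacing `X` by `-X` supplies the signs, since `m²` and `m` have the same parity. -/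
theorem coeff_partial (n d : ℕ) (h : d ≤ n) :
    coeff d (∑ j ∈ Finset.range n, (-1) ^ (j + 1) * X ^ ((j + 1) ^ 2) : ℤ⟦X⟧)
      = coeff d (rescale (-1) sqSeries) := by
  have hc : ∀ j : ℕ, coeff d ((-1) ^ (j + 1) * X ^ ((j + 1) ^ 2) : ℤ⟦X⟧)
      = if d = (j + 1) ^ 2 then (-1) ^ (j + 1) else 0 := by
    intro j
    rw [show ((-1) ^ (j + 1) : ℤ⟦X⟧) = C ((-1) ^ (j + 1)) by simp, coeff_C_mul, coeff_X_pow]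
    simp
  rw [map_sum, coeff_rescale, sqSeries, coeff_mk]
  simp only [hc]
  split_ifs with hm
  · obtain ⟨m, hm, rfl⟩ := hm
    obtain ⟨k, rfl⟩ := Nat.exists_eq_add_one_of_ne_zero hm.ne'
    rw [Finset.sum_eq_single k]
    · rw [if_pos rfl, mul_one]
      rcases Nat.even_or_odd (k + 1) with h | h
      · rw [h.neg_one_pow, (h.pow_of_ne_zero two_ne_zero).neg_one_pow]
      · rw [h.neg_one_pow, (h.pow).neg_one_pow]
    · intro b _ hb
      rw [if_neg]
      intro h'
      exact hb (by simpa using (Nat.pow_left_injective (by norm_num : 2 ≠ 0) h').symm)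
    · intro hk
      simp only [Finset.mem_range, not_lt] at hk
      nlinarith
  · rw [mul_zero]
    exact Finset.sum_eq_zero fun j _ => if_neg fun h' => hm ⟨j + 1, j.succ_pos, h'⟩

/-- Gauss' identity: the generating function of overpartitions is inverse to
`1 + 2 ∑_{m ≥ 1} (-1)^m X^(m²)`. -/
theorem gauss :
    (PowerSeries.mk fun n => (overpartition n : ℤ)) * (1 + 2 * rescale (-1) sqSeries) = 1 := by
  have hO : HasProd (fun i : ℕ => (1 + X ^ (i + 1)) * (∑' j : ℕ, (X ^ (i + 1)) ^ j : ℤ⟦X⟧))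
      (PowerSeries.mk fun n => (overpartition n : ℤ)) := by
    convert hasProd_distincts.mul hasProd_partitions using 1
    ext n
    rw [coeff_mk, coeff_mul, Finset.Nat.sum_antidiagonal_eq_sum_range_succ_mk, overpartition]
    simp
  have hw : ∀ i : ℕ, (1 - X ^ (i + 1)) * (∑' j : ℕ, (X ^ (i + 1)) ^ j : ℤ⟦X⟧) = 1 := fun i =>
    WithPiTopology.one_sub_mul_tsum_pow_of_constantCoeff_eq_zero (by simp)
  have hu : ∀ i : ℕ, ∃ u : ℤ⟦X⟧, (1 + X ^ (i + 1)) * u = 1 := fun i =>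
    (isUnit_iff_constantCoeff.mpr (by simp)).exists_right_inv
  choose u hu using hu
  have hF : Filter.Tendsto (fun n => (1 + 2 * ∑ j ∈ Finset.range n,
      (-1) ^ (j + 1) * X ^ ((j + 1) ^ 2) : ℤ⟦X⟧)) Filter.atTop
      (nhds (1 + 2 * rescale (-1) sqSeries)) := by
    refine tendsto_const_nhds.add (tendsto_const_nhds.mul ?_)
    rw [WithPiTopology.tendsto_iff_coeff_tendsto]
    exact fun d => tendsto_atTop_of_eventually_const (i₀ := d) fun n hn => coeff_partial n d hn
  refine tendsto_nhds_unique (hO.tendsto_prod_nat.mul hF) ?_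
  rw [WithPiTopology.tendsto_iff_coeff_tendsto]
  refine fun d => tendsto_atTop_of_eventually_const (i₀ := d + 1) fun n hn => ?_
  have h := X_pow_dvd_iff.mp (shanks_dvd hu hw n) d hn
  rwa [map_sub, sub_eq_zero] at h

end GenFun

/-! ### Reduction modulo 32 and dissection modulo 4 -/

section Mod
open PowerSeries

/-- Expansion of `1 / (1 + 2S)` modulo 32, using
`(1 + 2S)(1 - 2S + 4S² - 8S³ + 16S⁴) = 1 + 32 S⁵`. -/
theorem inv_mod (n : ℕ) : (-1) ^ n * (overpartition n : ℤ) ≡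
    coeff n (1 - 2 * sqSeries + 4 * sqSeries ^ 2 - 8 * sqSeries ^ 3 + 16 * sqSeries ^ 4)
      [ZMOD 32] := by
  have h := congrArg (rescale (-1)) gauss
  simp only [map_mul, map_add, map_one, rescale_rescale, map_ofNat] at h
  simp only [mul_neg, mul_one, neg_neg, rescale_one, RingHom.id_apply] at h
  have h1 : (-1) ^ n * (overpartition n : ℤ)
      = coeff n (rescale (-1) (PowerSeries.mk fun n => (overpartition n : ℤ))) := by
    rw [coeff_rescale, coeff_mk]
  rw [h1]
  set A := rescale (-1) (PowerSeries.mk fun n => (overpartition n : ℤ))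
  have h2 : 1 - 2 * sqSeries + 4 * sqSeries ^ 2 - 8 * sqSeries ^ 3 + 16 * sqSeries ^ 4
      = A + C (32 : ℤ) * (A * sqSeries ^ 5) := by
    have : (C (32 : ℤ) : ℤ⟦X⟧) = 32 := by simp
    rw [this]
    linear_combination -(1 - 2 * sqSeries + 4 * sqSeries ^ 2 - 8 * sqSeries ^ 3
      + 16 * sqSeries ^ 4) * h
  rw [h2, map_add, coeff_C_mul, Int.modEq_iff_dvd, add_sub_cancel_left]
  exact dvd_mul_right _ _

/-- The series `∑ X^(m²)` over odd positive integers `m`. -/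
noncomputable def oddSqSeries : ℤ⟦X⟧ :=
  open Classical in PowerSeries.mk fun n => if ∃ m : ℕ, 0 < m ∧ Odd m ∧ n = m ^ 2 then 1 else 0

theorem sqSeries_eq : sqSeries = expand 4 (by norm_num) sqSeries + oddSqSeries := by
  classical
  ext n
  rw [map_add, coeff_expand, sqSeries, oddSqSeries, coeff_mk, coeff_mk, coeff_mk]
  have hodd : ∀ m : ℕ, Odd m → ¬ 4 ∣ m ^ 2 := fun m hm h =>
    (Nat.not_even_iff_odd.mpr hm.pow) (even_iff_two_dvd.mpr (dvd_trans (by norm_num) h))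
  by_cases h4 : 4 ∣ n
  · obtain ⟨k, rfl⟩ := h4
    have h1 : (∃ m : ℕ, 0 < m ∧ 4 * k = m ^ 2) ↔ ∃ m : ℕ, 0 < m ∧ k = m ^ 2 := by
      constructor
      · rintro ⟨m, hm, h⟩
        rcases Nat.even_or_odd' m with ⟨c, rfl | rfl⟩
        · exact ⟨c, by omega, by nlinarith⟩
        · exact absurd ⟨k, h.symm⟩ (hodd _ ⟨c, rfl⟩)
      · rintro ⟨m, hm, rfl⟩
        exact ⟨2 * m, by omega, by ring⟩
    have h2 : ¬ ∃ m : ℕ, 0 < m ∧ Odd m ∧ 4 * k = m ^ 2 := by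
      rintro ⟨m, -, hm, h⟩
      exact hodd m hm ⟨k, h.symm⟩
    simp [h1, h2]
  · have h1 : (∃ m : ℕ, 0 < m ∧ n = m ^ 2) ↔ ∃ m : ℕ, 0 < m ∧ Odd m ∧ n = m ^ 2 := by
      constructor
      · rintro ⟨m, hm, rfl⟩
        refine ⟨m, hm, ?_, rfl⟩
        by_contra ho
        obtain ⟨c, rfl⟩ := even_iff_two_dvd.mp (Nat.not_odd_iff_even.mp ho)
        exact h4 ⟨c ^ 2, by ring⟩
      · rintro ⟨m, hm, -, h⟩
        exact ⟨m, hm, h⟩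
    simp [h1, h4]

/-- All exponents occurring in `f` lie in the residue class `r` modulo 4. -/
def SupportedMod (f : ℤ⟦X⟧) (r : ZMod 4) : Prop := ∀ n : ℕ, (n : ZMod 4) ≠ r → coeff n f = 0

theorem SupportedMod.mul {f g : ℤ⟦X⟧} {r s : ZMod 4} (hf : SupportedMod f r)
    (hg : SupportedMod g s) : SupportedMod (f * g) (r + s) := by
  intro n hn
  rw [coeff_mul]
  refine Finset.sum_eq_zero fun p hp => ?_
  rw [Finset.HasAntidiagonal.mem_antidiagonal] at hp
  by_cases h1 : (p.1 : ZMod 4) = r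
  · rw [hg p.2, mul_zero]
    rintro rfl
    exact hn (by rw [← hp, ← h1]; push_cast; rfl)
  · rw [hf p.1 h1, zero_mul]

theorem SupportedMod.pow {f : ℤ⟦X⟧} {r : ZMod 4} (hf : SupportedMod f r) (k : ℕ) :
    SupportedMod (f ^ k) (k * r) := by
  induction k with
  | zero =>
    intro n hn
    rw [pow_zero, coeff_one, if_neg]
    rintro rfl
    simp at hn
  | succ k ih =>
    rw [pow_succ, Nat.cast_succ, add_mul, one_mul]
    exact ih.mul hf

theorem supported_expand (f : ℤ⟦X⟧) : SupportedMod (expand 4 (by norm_num) f) 0 := fun n hn =>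
  coeff_expand_of_not_dvd _ _ _ fun h => hn ((ZMod.natCast_eq_zero_iff n 4).mpr h)

theorem supported_odd : SupportedMod oddSqSeries 1 := by
  classical
  intro n hn
  rw [oddSqSeries, coeff_mk, if_neg]
  rintro ⟨m, -, ⟨c, rfl⟩, rfl⟩
  refine hn ?_
  have h4 : (4 : ZMod 4) = 0 := rfl
  push_cast
  linear_combination ((c : ZMod 4) ^ 2 + c) * h4

/-- At exponents divisible by 4, a term of the binomial expansion of `(S(X⁴) + T)^k` containing
`T^j` with `j` not divisible by 4 does not contribute. -/
theorem coeff_mixed (f : ℤ⟦X⟧) (i j n : ℕ) (hj : (j : ZMod 4) ≠ 0) :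
    coeff (4 * n) (expand 4 (by norm_num) f ^ i * oddSqSeries ^ j) = 0 := by
  refine ((supported_expand f).pow i).mul (supported_odd.pow j) _ ?_
  have : ((4 * n : ℕ) : ZMod 4) = 0 := (ZMod.natCast_eq_zero_iff _ 4).mpr ⟨n, rfl⟩
  simpa [this] using hj.symm

/-- Modulo 2, the fourth power of `f` is `f(X⁴)`: apply Frobenius twice. -/
theorem pow_four_mod_two (f : ℤ⟦X⟧) (n : ℕ) :
    coeff (4 * n) (f ^ 4) ≡ coeff n f [ZMOD 2] := by
  refine (ZMod.intCast_eq_intCast_iff _ _ 2).mp ?_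
  have h : ∀ (g : ℤ⟦X⟧) (m : ℕ), ((coeff (2 * m) (g ^ 2) : ℤ) : ZMod 2) = (coeff m g : ℤ) := by
    intro g m
    have h1 : PowerSeries.map (frobenius (ZMod 2) 2)
        (expand 2 two_ne_zero (PowerSeries.map (Int.castRingHom (ZMod 2)) g))
        = PowerSeries.map (Int.castRingHom (ZMod 2)) g ^ 2 :=
      MvPowerSeries.map_frobenius_expand 2 two_ne_zero
    have h2 := congrArg (coeff (2 * m)) h1
    rw [ZMod.frobenius_zmod, PowerSeries.map_id, ← map_pow, id_eq, coeff_expand_mul,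
      coeff_map, coeff_map] at h2
    exact h2.symm
  rw [show f ^ 4 = (f ^ 2) ^ 2 by ring, show 4 * n = 2 * (2 * n) by ring]
  exact (h _ _).trans (h _ _)

theorem coeff_sq_pow (n k : ℕ) :
    coeff (4 * n) (expand 4 (by norm_num) sqSeries ^ k) = coeff n (sqSeries ^ k) := by
  rw [← map_pow, coeff_expand_mul]

end Mod

theorem overpartition_four_mul_mod_32 (n : ℕ)
    (hn : ¬ ∃ a : ℕ, 0 < a ∧ Odd a ∧ n = a ^ 2) :
    (overpartition (4 * n) : ℤ) ≡ (-1) ^ n * (overpartition n : ℤ) [ZMOD 32] := by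
  classical
  have h4 := inv_mod (4 * n)
  rw [(show Even (4 * n) from ⟨2 * n, by ring⟩).neg_one_pow, one_mul] at h4
  refine h4.trans (Int.ModEq.trans ?_ (inv_mod n).symm)
  have hodd : (2 : ℤ) ∣ PowerSeries.coeff (4 * n) (oddSqSeries ^ 4) := by
    rw [← Int.modEq_zero_iff_dvd]
    refine (pow_four_mod_two _ _).trans ?_
    rw [oddSqSeries, PowerSeries.coeff_mk, if_neg hn]
  obtain ⟨c, hc⟩ := hodd
  -- Expand the truncated inverse at `sqSeries = E + oddSqSeries`; of all terms containing
  -- `oddSqSeries`, only its fourth power survives at `4 * n`.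
  set E := PowerSeries.expand 4 (by norm_num) sqSeries with hE
  have key : (1 - 2 * sqSeries + 4 * sqSeries ^ 2 - 8 * sqSeries ^ 3 + 16 * sqSeries ^ 4) =
      1 - PowerSeries.C (2 : ℤ) * (E ^ 1 + E ^ 0 * oddSqSeries ^ 1)
      + PowerSeries.C (4 : ℤ) * (E ^ 2 + PowerSeries.C 2 * (E ^ 1 * oddSqSeries ^ 1)
        + E ^ 0 * oddSqSeries ^ 2)
      - PowerSeries.C (8 : ℤ) * (E ^ 3 + PowerSeries.C 3 * (E ^ 2 * oddSqSeries ^ 1)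
        + PowerSeries.C 3 * (E ^ 1 * oddSqSeries ^ 2) + E ^ 0 * oddSqSeries ^ 3)
      + PowerSeries.C (16 : ℤ) * (E ^ 4 + PowerSeries.C 4 * (E ^ 3 * oddSqSeries ^ 1)
        + PowerSeries.C 6 * (E ^ 2 * oddSqSeries ^ 2)
        + PowerSeries.C 4 * (E ^ 1 * oddSqSeries ^ 3) + oddSqSeries ^ 4) := by
    rw [sqSeries_eq, ← hE]
    simp only [map_ofNat]
    ring
  have hone : PowerSeries.coeff (4 * n) (1 : PowerSeries ℤ) = PowerSeries.coeff n 1 := by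
    simp [PowerSeries.coeff_one]
  have hr : (1 - 2 * sqSeries + 4 * sqSeries ^ 2 - 8 * sqSeries ^ 3 + 16 * sqSeries ^ 4) =
      1 - PowerSeries.C (2 : ℤ) * sqSeries ^ 1 + PowerSeries.C (4 : ℤ) * sqSeries ^ 2
      - PowerSeries.C (8 : ℤ) * sqSeries ^ 3 + PowerSeries.C (16 : ℤ) * sqSeries ^ 4 := by
    simp
  have m1 : ∀ i, PowerSeries.coeff (4 * n) (E ^ i * oddSqSeries ^ 1) = 0 := fun i =>
    coeff_mixed _ i 1 n (by decide)
  have m2 : ∀ i, PowerSeries.coeff (4 * n) (E ^ i * oddSqSeries ^ 2) = 0 := fun i =>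
    coeff_mixed _ i 2 n (by decide)
  have m3 : ∀ i, PowerSeries.coeff (4 * n) (E ^ i * oddSqSeries ^ 3) = 0 := fun i =>
    coeff_mixed _ i 3 n (by decide)
  have m0 : ∀ k, PowerSeries.coeff (4 * n) (E ^ k) = PowerSeries.coeff n (sqSeries ^ k) :=
    coeff_sq_pow n
  have hl := congrArg (PowerSeries.coeff (4 * n)) key
  simp only [map_add, map_sub, PowerSeries.coeff_C_mul, m1, m2, m3, m0, hc, hone]
    at hl
  have hr' := congrArg (PowerSeries.coeff n) hr
  simp only [map_add, map_sub, PowerSeries.coeff_C_mul] at hr'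
  rw [Int.modEq_iff_dvd]
  refine ⟨-c, ?_⟩
  simp only [map_add, map_sub, hone]
  linear_combination hr' - hl
end

section
/- For all nonnegative integers n and k, the overpartition number satisfies p̄(4^k(16n+14)) ≡ 0 (mod 16). -/
open PowerSeries Finset Filter Topology
open scoped PowerSeries.WithPiTopology

/-! ### Squares -/

theorem sq_add_sq_ne (n k x y : ℕ) : x ^ 2 + y ^ 2 ≠ 4 ^ k * (16 * n + 14) := by
  induction k generalizing x y with
  | zero =>
    intro h
    have h16 : ((x : ZMod 16)) ^ 2 + (y : ZMod 16) ^ 2 = 14 := by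
      have h' := congrArg (Nat.cast : ℕ → ZMod 16) h
      push_cast at h'
      rw [h', show (16 : ZMod 16) = 0 from rfl]
      ring
    revert h16
    generalize (x : ZMod 16) = a
    generalize (y : ZMod 16) = b
    revert a b
    decide
  | succ k ih =>
    intro h
    have h4 : ((x : ZMod 4)) ^ 2 + (y : ZMod 4) ^ 2 = 0 := by
      have h' := congrArg (Nat.cast : ℕ → ZMod 4) h
      push_cast at h'
      rw [h', pow_succ, show (4 : ZMod 4) = 0 from rfl]
      ring
    -- In `ZMod 4`, `2 * a = 0` says that `a` is even.
    have key : ∀ a b : ZMod 4, a ^ 2 + b ^ 2 = 0 → 2 * a = 0 ∧ 2 * b = 0 := by decide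
    obtain ⟨hx, hy⟩ := key _ _ h4
    have hx : 4 ∣ 2 * x := (ZMod.natCast_eq_zero_iff _ _).1 (by exact_mod_cast hx)
    have hy : 4 ∣ 2 * y := (ZMod.natCast_eq_zero_iff _ _).1 (by exact_mod_cast hy)
    obtain ⟨a, rfl⟩ : 2 ∣ x := by omega
    obtain ⟨b, rfl⟩ : 2 ∣ y := by omega
    apply ih a b
    rw [pow_succ 4] at h
    linarith

theorem sq_add_two_mul_sq_ne (n k x y : ℕ) : x ^ 2 + 2 * y ^ 2 ≠ 4 ^ k * (16 * n + 14) := by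
  induction k generalizing x y with
  | zero =>
    intro h
    have h16 : ((x : ZMod 16)) ^ 2 + 2 * (y : ZMod 16) ^ 2 = 14 := by
      have h' := congrArg (Nat.cast : ℕ → ZMod 16) h
      push_cast at h'
      rw [h', show (16 : ZMod 16) = 0 from rfl]
      ring
    revert h16
    generalize (x : ZMod 16) = a
    generalize (y : ZMod 16) = b
    revert a b
    decide
  | succ k ih =>
    intro h
    have h4 : ((x : ZMod 4)) ^ 2 + 2 * (y : ZMod 4) ^ 2 = 0 := by
      have h' := congrArg (Nat.cast : ℕ → ZMod 4) h
      push_cast at h'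
      rw [h', pow_succ, show (4 : ZMod 4) = 0 from rfl]
      ring
    -- In `ZMod 4`, `2 * a = 0` says that `a` is even.
    have key : ∀ a b : ZMod 4, a ^ 2 + 2 * b ^ 2 = 0 → 2 * a = 0 ∧ 2 * b = 0 := by decide
    obtain ⟨hx, hy⟩ := key _ _ h4
    have hx : 4 ∣ 2 * x := (ZMod.natCast_eq_zero_iff _ _).1 (by exact_mod_cast hx)
    have hy : 4 ∣ 2 * y := (ZMod.natCast_eq_zero_iff _ _).1 (by exact_mod_cast hy)
    obtain ⟨a, rfl⟩ : 2 ∣ x := by omega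
    obtain ⟨b, rfl⟩ : 2 ∣ y := by omega
    apply ih a b
    rw [pow_succ 4] at h
    linarith

/-! ### Gauss's identity -/

/-- The sum `∑_{s ≤ n} (-1)ˢ (∏_{s < i ≤ n} (1 - qⁱ)) (∏_{i < s} (1 + qⁱ)) q^((n + 1) s)`. -/
def shanksSum {R : Type*} [CommRing R] (q : R) (n : ℕ) : R :=
  ∑ s ∈ range (n + 1), (-1) ^ s * (∏ i ∈ Ico s n, (1 - q ^ (i + 1))) *
    (∏ i ∈ range s, (1 + q ^ i)) * q ^ ((n + 1) * s)

theorem shanksSum_succ {R : Type*} [CommRing R] (q : R) (n : ℕ) :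
    shanksSum q (n + 1) = (1 + q ^ (n + 1)) * shanksSum q n +
      2 * (-1) ^ (n + 1) * q ^ ((n + 1) ^ 2) * ∏ i ∈ range (n + 1), (1 + q ^ (i + 1)) := by
  -- The telescoping function. Starting the first product at `i = s` makes `g 0 = 0`.
  let g : ℕ → R := fun s ↦ (-1) ^ s * (∏ i ∈ Ico s (n + 1), (1 - q ^ i)) *
    (∏ i ∈ range s, (1 + q ^ i)) * q ^ ((n + 1) * s)
  have hstep : ∀ s ∈ range (n + 1),
      (-1) ^ s * (∏ i ∈ Ico s (n + 1), (1 - q ^ (i + 1))) *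
        (∏ i ∈ range s, (1 + q ^ i)) * q ^ ((n + 1 + 1) * s) =
      (1 + q ^ (n + 1)) * ((-1) ^ s * (∏ i ∈ Ico s n, (1 - q ^ (i + 1))) *
        (∏ i ∈ range s, (1 + q ^ i)) * q ^ ((n + 1) * s)) + (g (s + 1) - g s) := by
    intro s hs
    have hs : s ≤ n := by simpa [Nat.lt_succ_iff] using hs
    have h1 : ∏ i ∈ Ico (s + 1) (n + 1), (1 - q ^ i) = ∏ i ∈ Ico s n, (1 - q ^ (i + 1)) := by
      rw [← prod_Ico_add' (fun i ↦ 1 - q ^ i)]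
    simp only [g]
    rw [prod_Ico_succ_top hs, prod_eq_prod_Ico_succ_bot (Nat.lt_succ_of_le hs), h1,
      prod_range_succ]
    ring
  have hg0 : g 0 = 0 := by
    simp only [g]
    rw [prod_eq_prod_Ico_succ_bot (Nat.succ_pos n)]
    simp
  have hgn : g (n + 1) = (-1) ^ (n + 1) * (∏ i ∈ range (n + 1), (1 + q ^ i)) *
      q ^ ((n + 1) * (n + 1)) := by simp [g]
  have hD : 2 * ∏ i ∈ range (n + 1), (1 + q ^ (i + 1)) =
      (∏ i ∈ range (n + 1), (1 + q ^ i)) * (1 + q ^ (n + 1)) := by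
    rw [← prod_range_succ, prod_range_succ' (fun i ↦ 1 + q ^ i) (n + 1)]
    ring
  rw [shanksSum, sum_range_succ, sum_congr rfl hstep, sum_add_distrib, sum_range_sub, hg0, hgn,
    ← mul_sum, ← shanksSum]
  simp only [Ico_self, prod_empty]
  linear_combination (-(-1) ^ (n + 1) * q ^ ((n + 1) ^ 2)) * hD

/-- A finite form of Gauss's identity `(1 + 2 ∑_{j ≥ 1} (-1)ʲ q^(j²)) ∏ (1 + qⁱ) = ∏ (1 - qⁱ)`. -/
theorem shanks_identity {R : Type*} [CommRing R] (q : R) (n : ℕ) :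
    (1 + 2 * ∑ j ∈ range n, (-1) ^ (j + 1) * q ^ ((j + 1) ^ 2)) *
      ∏ i ∈ range n, (1 + q ^ (i + 1)) = shanksSum q n := by
  induction n with
  | zero => simp [shanksSum]
  | succ n ih =>
    rw [shanksSum_succ, ← ih, sum_range_succ, prod_range_succ]
    ring

theorem dvd_shanksSum_sub {R : Type*} [CommRing R] (q : R) (n : ℕ) :
    q ^ (n + 1) ∣ shanksSum q n - ∏ i ∈ range n, (1 - q ^ (i + 1)) := by
  rw [shanksSum, sum_range_succ']
  have h0 : (-1) ^ 0 * (∏ i ∈ Ico 0 n, (1 - q ^ (i + 1))) * (∏ i ∈ range 0, (1 + q ^ i)) *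
      q ^ ((n + 1) * 0) = ∏ i ∈ range n, (1 - q ^ (i + 1)) := by
    rw [range_eq_Ico n]
    simp
  rw [h0, add_sub_cancel_right]
  refine dvd_sum fun s _ ↦ Dvd.dvd.mul_left ?_ _
  exact pow_dvd_pow _ (Nat.le_mul_of_pos_right _ (Nat.succ_pos s))

/-- The series `∑_{j ≥ 1} (-1)ʲ X^(j²)`. -/
noncomputable def altSquares : ℤ⟦X⟧ := ∑' j : ℕ, (-1) ^ (j + 1) * X ^ ((j + 1) ^ 2)

theorem summable_altSquares :
    Summable fun j : ℕ ↦ ((-1) ^ (j + 1) * X ^ ((j + 1) ^ 2) : ℤ⟦X⟧) := by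
  apply WithPiTopology.summable_of_tendsto_order_atTop_nhds_top
  refine ENat.tendsto_nhds_top_iff_natCast_lt.mpr fun n ↦ eventually_atTop.mpr ⟨n, fun m hm ↦ ?_⟩
  grw [← le_order_mul]
  refine lt_add_of_nonneg_of_lt (by simp) ?_
  rw [order_X_pow]
  norm_cast
  nlinarith

theorem coeff_altSquares_eq_zero {n : ℕ} (h : ∀ x, n ≠ x ^ 2) : coeff n altSquares = 0 := by
  rw [altSquares, summable_altSquares.map_tsum _ (WithPiTopology.continuous_coeff ℤ n)]
  refine (tsum_congr fun j ↦ ?_).trans tsum_zero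
  rw [show ((-1) ^ (j + 1) : ℤ⟦X⟧) = C ((-1) ^ (j + 1)) by simp, coeff_C_mul, coeff_X_pow,
    if_neg (h _), mul_zero]

/-- Gauss's identity, with the two infinite products entering as the limits `A` and `B`. -/
theorem gauss_identity {A B : ℤ⟦X⟧} (hA : HasProd (fun i : ℕ ↦ (1 + X ^ (i + 1) : ℤ⟦X⟧)) A)
    (hB : HasProd (fun i : ℕ ↦ (1 - X ^ (i + 1) : ℤ⟦X⟧)) B) : (1 + 2 * altSquares) * A = B := by
  have hT := (((summable_altSquares.hasSum.tendsto_sum_nat).const_mul 2).const_add 1).mul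
    hA.tendsto_prod_nat
  have h0 := hT.sub hB.tendsto_prod_nat
  simp_rw [shanks_identity] at h0
  refine sub_eq_zero.1 (tendsto_nhds_unique h0 ?_)
  rw [WithPiTopology.tendsto_iff_coeff_tendsto]
  refine fun d ↦ tendsto_atTop_of_eventually_const (i₀ := d) fun n hn ↦ ?_
  rw [map_zero]
  exact X_pow_dvd_iff.1 (dvd_shanksSum_sub X n) d (by omega)

/-! ### Overpartitions -/

theorem mk_overpartition_mul :
    (PowerSeries.mk fun n ↦ (overpartition n : ℤ)) * (1 + 2 * altSquares) = 1 := by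
  have hA : HasProd (fun i : ℕ ↦ (1 + X ^ (i + 1) : ℤ⟦X⟧))
      (PowerSeries.mk fun n ↦ (#(Nat.Partition.distincts n) : ℤ)) := by
    have h := Nat.Partition.hasProd_powerSeriesMk_card_countRestricted ℤ (m := 2) two_pos
    simpa [Nat.Partition.countRestricted_two, sum_range_succ] using h
  have hP := Nat.Partition.hasProd_powerSeriesMk_card_restricted ℤ (fun _ ↦ True)
  have hB := (WithPiTopology.multipliable_one_sub_X_pow ℤ).hasProd
  have hPB := hP.mul hB
  have hone : ∀ i : ℕ, (if True then ∑' j : ℕ, (X : ℤ⟦X⟧) ^ ((i + 1) * j) else 1) *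
      (1 - X ^ (i + 1)) = 1 := by
    intro i
    simp only [if_true, pow_mul]
    exact WithPiTopology.tsum_pow_mul_one_sub_of_constantCoeff_eq_zero (by simp)
  simp_rw [hone] at hPB
  have hPB := hPB.unique hasProd_one
  have hO : (PowerSeries.mk fun n ↦ (overpartition n : ℤ)) =
      (PowerSeries.mk fun n ↦ (#(Nat.Partition.distincts n) : ℤ)) *
      (PowerSeries.mk fun n ↦ (#(Nat.Partition.restricted n fun _ ↦ True) : ℤ)) := by
    ext n
    rw [coeff_mul, Nat.sum_antidiagonal_eq_sum_range_succ_mk]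
    simp [overpartition, Nat.Partition.restricted]
  rw [hO, mul_right_comm, mul_comm _ (1 + 2 * altSquares), gauss_identity hA hB, mul_comm, hPB]

theorem coeff_altSquares_sq {N : ℕ} (h : ∀ x y, x ^ 2 + y ^ 2 ≠ N) :
    coeff N (altSquares ^ 2) = 0 := by
  rw [sq, coeff_mul]
  refine sum_eq_zero fun p hp ↦ ?_
  by_contra hne
  obtain ⟨h1, h2⟩ := mul_ne_zero_iff.1 hne
  obtain ⟨x, hx⟩ := not_forall_not.1 (mt coeff_altSquares_eq_zero h1)
  obtain ⟨y, hy⟩ := not_forall_not.1 (mt coeff_altSquares_eq_zero h2)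
  exact h x y (by rw [← hx, ← hy]; exact mem_antidiagonal.1 hp)

/-- The coefficient is a signed count of the triples with `x² + c² + d² = N`. Modulo `2` the signs
disappear, and the pairs `(c, d)` and `(d, c)` cancel because `c ≠ d`. -/
theorem even_coeff_altSquares_cube {N : ℕ} (h : ∀ x y, x ^ 2 + 2 * y ^ 2 ≠ N) :
    Even (coeff N (altSquares ^ 3)) := by
  rw [pow_succ', sq, coeff_mul]
  refine even_sum _ fun p hp ↦ ?_
  by_cases hp0 : coeff p.1 altSquares = 0
  · simp [hp0]
  obtain ⟨x, hx⟩ := not_forall_not.1 (mt coeff_altSquares_eq_zero hp0)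
  refine Even.mul_left ?_ _
  rw [← ZMod.intCast_eq_zero_iff_even, coeff_mul, Int.cast_sum]
  refine sum_involution (fun r _ ↦ r.swap) (fun r _ ↦ ?_) (fun r hr hr0 heq ↦ ?_)
    (fun r hr ↦ by simpa [add_comm] using hr) (fun r _ ↦ r.swap_swap)
  · rw [Prod.fst_swap, Prod.snd_swap, mul_comm, CharTwo.add_self_eq_zero]
  · have h12 : r.2 = r.1 := congrArg Prod.fst heq
    have hr1 : coeff r.1 altSquares ≠ 0 := fun h0 ↦ hr0 (by simp [h0])
    obtain ⟨y, hy⟩ := not_forall_not.1 (mt coeff_altSquares_eq_zero hr1)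
    have e1 := mem_antidiagonal.1 hp
    have e2 := mem_antidiagonal.1 hr
    exact h x y (by omega)

theorem overpartition_pow_four_16n_add_14 (n k : ℕ) :
    16 ∣ overpartition (4 ^ k * (16 * n + 14)) := by
  set N := 4 ^ k * (16 * n + 14) with hN
  set O : ℤ⟦X⟧ := PowerSeries.mk fun n ↦ (overpartition n : ℤ) with hO
  have hexp : O = 1 - C 2 * altSquares + C 4 * altSquares ^ 2 - C 8 * altSquares ^ 3 +
      C 16 * (altSquares ^ 4 * O) := by
    simp only [map_ofNat]
    -- `(1 + 2 S) (1 - 2 S + 4 S² - 8 S³) = 1 - 16 S⁴`.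
    linear_combination (1 - 2 * altSquares + 4 * altSquares ^ 2 - 8 * altSquares ^ 3) *
      mk_overpartition_mul
  have hN0 : N ≠ 0 := by positivity
  have h1 : coeff N altSquares = 0 :=
    coeff_altSquares_eq_zero fun x hx ↦ sq_add_sq_ne n k x 0 (by simp [← hN, hx])
  have h2 : coeff N (altSquares ^ 2) = 0 := coeff_altSquares_sq (sq_add_sq_ne n k)
  obtain ⟨c, h3⟩ := even_coeff_altSquares_cube (sq_add_two_mul_sq_ne n k)
  rw [← hN] at h3
  have hc := congrArg (coeff N) hexp
  simp only [map_add, map_sub, coeff_C_mul, h1, h2, h3, coeff_one, if_neg hN0] at hc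
  rw [hO, coeff_mk, ← hO] at hc
  have : (16 : ℤ) ∣ (overpartition N : ℤ) := ⟨-c + coeff N (altSquares ^ 4 * O), by
    linear_combination hc⟩
  exact_mod_cast this
end

section
/- For all nonnegative integers n and k, the overpartition number satisfies p̄(4^k(72n+69)) ≡ 0 (mod 32). -/
open Finset PowerSeries

/-! ### Truncated Gauss identity -/

section Gauss

variable {R : Type*} [CommRing R]

/-- The `n`-th summand of `E_k`, namely
`x^(kn) (1 - x^k) ⋯ (1 - x^(k+n-1)) / ((1 + x^k) ⋯ (1 + x^(k+n)))`. The sequence `w` supplies the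
inverses: `w i` is meant to be the inverse of `1 + x^i`. -/
def gaussTerm (x : R) (w : ℕ → R) (k n : ℕ) : R :=
  x ^ (k * n) * (∏ i ∈ range n, (1 - x ^ (k + i))) * ∏ i ∈ range (n + 1), w (k + i)

/-- Truncation of `E_k + x^(2k+1) E_{k+1} = 1`, with the remainder left by the telescoping sum. -/
lemma sum_gaussTerm_add (x : R) (w : ℕ → R) (k N : ℕ)
    (hw : ∀ i, (1 + x ^ (k + i)) * w (k + i) = 1) :
    ∑ n ∈ range (N + 1), gaussTerm x w k n +
        x ^ (2 * k + 1) * ∑ n ∈ range (N + 1), gaussTerm x w (k + 1) n =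
      1 - x ^ (k * (N + 1)) * (∏ i ∈ range N, (1 - x ^ (k + 1 + i))) *
        (1 - x ^ (2 * k + N + 1)) * ∏ i ∈ range (N + 2), w (k + i) := by
  induction N with
  | zero =>
    have h0 := hw 0
    have h1 := hw 1
    simp only [gaussTerm, zero_add, sum_range_one, prod_range_zero, prod_range_succ, mul_zero,
      pow_zero, one_mul, add_zero, mul_one] at h0 h1 ⊢
    have e1 : x ^ (k + 1) = x * x ^ k := by ring
    have e2 : x ^ (2 * k + 1) = x * x ^ k * x ^ k := by ring
    rw [e1] at h1
    rw [e2]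
    generalize x ^ k = y at *
    generalize w k = u at *
    generalize w (k + 1) = v at *
    linear_combination (1 - u) * h1 + ((1 + x * y) * v - x * y ^ 2 * v) * h0
  | succ N ih =>
    rw [sum_range_succ, sum_range_succ _ (N + 1), mul_add]
    have e : ∀ a b c d : R, a + b + (c + d) = (a + c) + (b + d) := by intros; ring
    rw [e, ih]
    simp only [gaussTerm]
    have h1 : ∏ i ∈ range (N + 2), w (k + i) =
        (1 + x ^ (k + (N + 2))) * ∏ i ∈ range (N + 3), w (k + i) := by
      rw [prod_range_succ _ (N + 2)]
      linear_combination (-∏ i ∈ range (N + 2), w (k + i)) * hw (N + 2)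
    have h2 : ∏ i ∈ range (N + 2), w (k + 1 + i) =
        (1 + x ^ k) * ∏ i ∈ range (N + 3), w (k + i) := by
      have hs : ∏ i ∈ range (N + 3), w (k + i) = (∏ i ∈ range (N + 2), w (k + 1 + i)) * w k := by
        rw [prod_range_succ', add_zero]
        congr 1
        exact prod_congr rfl fun i _ => by rw [add_assoc, add_comm 1 i]
      rw [hs]
      have h0 := hw 0
      rw [add_zero] at h0
      linear_combination (-∏ i ∈ range (N + 2), w (k + 1 + i)) * h0
    have h3 : ∏ i ∈ range (N + 1), (1 - x ^ (k + i)) =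
        (∏ i ∈ range N, (1 - x ^ (k + 1 + i))) * (1 - x ^ k) := by
      rw [prod_range_succ', add_zero]
      congr 1
      exact prod_congr rfl fun i _ => by rw [add_assoc k 1 i, add_comm 1 i]
    rw [h1, h2, h3, prod_range_succ (fun i => 1 - x ^ (k + 1 + i)) N]
    ring

/-- Truncation of `(x;x)∞ / (-x;x)∞ = 1 - 2 x E_1`: the difference of consecutive partial products
of the left-hand side is a multiple of a `gaussTerm`. -/
lemma prod_eq_one_sub (x : R) (w : ℕ → R) (N : ℕ)
    (hw : ∀ i, (1 + x ^ (i + 1)) * w (i + 1) = 1) :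
    (∏ i ∈ range N, (1 - x ^ (i + 1))) * ∏ i ∈ range N, w (i + 1) =
      1 - 2 * x * ∑ n ∈ range N, gaussTerm x w 1 n := by
  induction N with
  | zero => simp
  | succ N ih =>
    rw [sum_range_succ, mul_add, ← sub_sub, ← ih]
    simp only [gaussTerm, prod_range_succ, add_comm 1]
    linear_combination
      ((∏ i ∈ range N, (1 - x ^ (i + 1))) * ∏ i ∈ range N, w (i + 1)) * hw N

/-- The recurrence for `E_k` applied `j` times, starting from `x E_1`. -/
lemma x_mul_sum_gaussTerm (x : R) (w : ℕ → R) (N : ℕ)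
    (hw : ∀ i, (1 + x ^ (i + 1)) * w (i + 1) = 1) (j : ℕ) :
    x ^ (N + 1) ∣ x * ∑ n ∈ range (N + 1), gaussTerm x w 1 n +
      ∑ i ∈ range j, (-1) ^ (i + 1) * x ^ (i + 1) ^ 2 -
      (-1) ^ j * x ^ (j + 1) ^ 2 * ∑ n ∈ range (N + 1), gaussTerm x w (j + 1) n := by
  induction j with
  | zero => simp
  | succ j ih =>
    have h := sum_gaussTerm_add x w (j + 1) N (fun i => by
      have := hw (j + i)
      rwa [show j + i + 1 = j + 1 + i by ring] at this)
    have h' : x ^ (N + 1) ∣ (-1) ^ j * x ^ (j + 1) ^ 2 *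
        (∑ n ∈ range (N + 1), gaussTerm x w (j + 1) n +
          x ^ (2 * (j + 1) + 1) * ∑ n ∈ range (N + 1), gaussTerm x w (j + 1 + 1) n - 1) := by
      rw [h]
      refine Dvd.dvd.mul_left ?_ _
      rw [sub_sub_cancel_left, dvd_neg, mul_assoc, mul_assoc]
      exact Dvd.dvd.mul_right (pow_dvd_pow x (by nlinarith)) _
    convert dvd_add ih h' using 1
    rw [sum_range_succ _ j]
    ring

/-- The identity of Gauss, `(x;x)∞ = (-x;x)∞ (1 + 2 ∑_{m ≥ 1} (-1)^m x^(m²))`, modulo `x^(N+1)`. -/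
lemma gauss_finite_s7 (x : R) (w : ℕ → R) (N : ℕ)
    (hw : ∀ i, (1 + x ^ (i + 1)) * w (i + 1) = 1) :
    x ^ (N + 1) ∣ ∏ i ∈ range (N + 1), (1 - x ^ (i + 1)) -
      (∏ i ∈ range (N + 1), (1 + x ^ (i + 1))) *
        (1 + 2 * ∑ i ∈ range (N + 1), (-1) ^ (i + 1) * x ^ (i + 1) ^ 2) := by
  have h1 := prod_eq_one_sub x w (N + 1) hw
  have h2 := x_mul_sum_gaussTerm x w N hw (N + 1)
  have h3 : (∏ i ∈ range (N + 1), (1 + x ^ (i + 1))) * ∏ i ∈ range (N + 1), w (i + 1) = 1 := by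
    rw [← prod_mul_distrib]
    exact prod_eq_one fun i _ => hw i
  have h4 : x ^ (N + 1) ∣ x * ∑ n ∈ range (N + 1), gaussTerm x w 1 n +
      ∑ i ∈ range (N + 1), (-1) ^ (i + 1) * x ^ (i + 1) ^ 2 := by
    have h5 : x ^ (N + 1) ∣ (-1) ^ (N + 1) * x ^ (N + 1 + 1) ^ 2 *
        ∑ n ∈ range (N + 1), gaussTerm x w (N + 1 + 1) n :=
      Dvd.dvd.mul_right (Dvd.dvd.mul_left (pow_dvd_pow x (by nlinarith)) _) _
    simpa using dvd_add h2 h5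
  convert h4.mul_left (-2 * ∏ i ∈ range (N + 1), (1 + x ^ (i + 1))) using 1
  linear_combination (∏ i ∈ range (N + 1), (1 + x ^ (i + 1))) * h1 -
    (∏ i ∈ range (N + 1), (1 - x ^ (i + 1))) * h3

end Gauss

/-! ### The generating function of overpartitions -/

/-- The series `∑_{m ≥ 1} (-1)^m q^(m²)`; the sign is written as `(-1)^(m²)`. -/
noncomputable def squareSeries : ℤ⟦X⟧ :=
  PowerSeries.mk fun n => if IsSquare n ∧ 0 < n then (-1) ^ n else 0

/-- The partial sum `∑_{m=1}^{N+1} (-1)^m q^(m²)` of `squareSeries`. -/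
noncomputable def thetaPartial (N : ℕ) : ℤ⟦X⟧ :=
  ∑ i ∈ range (N + 1), (-1) ^ (i + 1) * (X : ℤ⟦X⟧) ^ (i + 1) ^ 2

lemma coeff_neg_one_pow_mul (n k m : ℕ) :
    coeff n ((-1) ^ k * (X : ℤ⟦X⟧) ^ m) = if n = m then (-1) ^ k else 0 := by
  rw [show ((-1) ^ k : ℤ⟦X⟧) = C ((-1) ^ k) by simp, coeff_C_mul, coeff_X_pow]
  simp

lemma X_pow_dvd_squareSeries_sub (N : ℕ) :
    X ^ (N + 1) ∣ squareSeries - thetaPartial N := by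
  rw [X_pow_dvd_iff]
  intro m hm
  rw [map_sub, thetaPartial, map_sum, squareSeries, coeff_mk, sub_eq_zero]
  simp only [coeff_neg_one_pow_mul]
  split_ifs with h
  · obtain ⟨⟨r, rfl⟩, h0⟩ := h
    have hr : 0 < r := Nat.pos_of_mul_pos_left h0
    rw [sum_eq_single (r - 1)]
    · rw [Nat.sub_add_cancel hr, if_pos (by ring), pow_mul]
      rcases Nat.even_or_odd r with h | h <;> simp [h.neg_one_pow]
    · intro b _ hb
      refine if_neg fun h => hb ?_
      have : r = b + 1 := by nlinarith [sq_nonneg (r - (b+1) : ℤ)]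
      omega
    · intro h
      exfalso; apply h; rw [mem_range]; nlinarith [Nat.sub_le r 1]
  · symm
    refine sum_eq_zero fun i _ => if_neg fun h' => h ⟨⟨i + 1, by rw [h']; ring⟩, by rw [h']; positivity⟩

open PowerSeries.WithPiTopology in
/-- The product of the generating functions `D` of partitions into distinct parts and `P` of all
partitions is the inverse of the theta series. -/
lemma genFun_mul (P D : ℤ⟦X⟧)
    (hP : P = PowerSeries.mk fun n => (Fintype.card (Nat.Partition n) : ℤ))
    (hD : D = PowerSeries.mk fun n => ((Nat.Partition.distincts n).card : ℤ)) :
    D * P * (1 + 2 * squareSeries) = 1 := by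
  let _ : TopologicalSpace ℤ := ⊥
  have _ : DiscreteTopology ℤ := ⟨rfl⟩
  have hA : HasProd (fun _ : ℕ => (1 : ℤ⟦X⟧)) (P * ∏' i, (1 - (X : ℤ⟦X⟧) ^ (i + 1))) := by
    have h1 := Nat.Partition.hasProd_powerSeriesMk_card_restricted ℤ (fun _ => True)
    simp only [if_true, Nat.Partition.restricted, implies_true, filter_true, card_univ] at h1
    rw [← hP] at h1
    have h2 := h1.mul (multipliable_one_sub_X_pow ℤ).hasProd
    have e : (fun _ : ℕ => (1 : ℤ⟦X⟧)) =
        fun i => (∑' j : ℕ, (X : ℤ⟦X⟧) ^ ((i + 1) * j)) * (1 - X ^ (i + 1)) := by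
      funext i
      simp_rw [pow_mul]
      rw [tsum_pow_mul_one_sub_of_constantCoeff_eq_zero (by simp)]
    rw [e]
    exact h2
  have hP1 : P * ∏' i, (1 - (X : ℤ⟦X⟧) ^ (i + 1)) = 1 := hA.unique hasProd_one
  have hB : HasProd (fun i => 1 + (X : ℤ⟦X⟧) ^ (i + 1)) D := by
    have h1 := Nat.Partition.hasProd_powerSeriesMk_card_countRestricted ℤ two_pos
    simp only [Nat.Partition.countRestricted_two] at h1
    rw [← hD] at h1
    have e : (fun i => 1 + (X : ℤ⟦X⟧) ^ (i + 1)) =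
        fun i => ∑ j ∈ range 2, (X : ℤ⟦X⟧) ^ ((i + 1) * j) := by
      funext i
      simp [sum_range_succ]
    rw [e]
    exact h1
  have hlim : ∏' i, (1 - (X : ℤ⟦X⟧) ^ (i + 1)) - D * (1 + 2 * squareSeries) = 0 := by
    have t1 := ((multipliable_one_sub_X_pow ℤ).hasProd.tendsto_prod_nat.sub
      (hB.tendsto_prod_nat.mul_const (1 + 2 * squareSeries)))
    refine tendsto_nhds_unique t1 ?_
    rw [tendsto_iff_coeff_tendsto]
    refine fun d => tendsto_atTop_of_eventually_const (i₀ := d + 1) fun m hm => ?_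
    obtain ⟨N, rfl⟩ : ∃ N, m = N + 1 := ⟨m - 1, by omega⟩
    have hw : ∀ i, (1 + (X : ℤ⟦X⟧) ^ (i + 1)) * invOfUnit (1 + (X : ℤ⟦X⟧) ^ (i + 1)) 1 = 1 :=
      fun i => mul_invOfUnit _ _ (by simp)
    have h1 := gauss_finite_s7 (X : ℤ⟦X⟧) (fun i => invOfUnit (1 + (X : ℤ⟦X⟧) ^ i) 1) N hw
    rw [← thetaPartial] at h1
    have h2 := (X_pow_dvd_squareSeries_sub N).mul_left
      (-2 * ∏ i ∈ range (N + 1), (1 + (X : ℤ⟦X⟧) ^ (i + 1)))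
    have h3 := dvd_add h1 h2
    rw [map_zero]
    refine (X_pow_dvd_iff.mp ?_) d (show d < N + 1 by omega)
    convert h3 using 1
    ring
  linear_combination hP1 - P * hlim

lemma coeff_overpartition (P D : ℤ⟦X⟧)
    (hP : P = PowerSeries.mk fun n => (Fintype.card (Nat.Partition n) : ℤ))
    (hD : D = PowerSeries.mk fun n => ((Nat.Partition.distincts n).card : ℤ)) (n : ℕ) :
    coeff n (D * P) = overpartition n := by
  rw [coeff_mul, overpartition, Nat.sum_antidiagonal_eq_sum_range_succ_mk, hP, hD]
  simp

/-! ### Sums of one, two and four squares -/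

lemma sq_add_sq_mod_nine {a b : ℕ} : (a ^ 2 + b ^ 2) % 9 ≠ 6 := by
  have ha : a % 9 < 9 := Nat.mod_lt _ (by norm_num)
  have hb : b % 9 < 9 := Nat.mod_lt _ (by norm_num)
  rw [Nat.add_mod, Nat.pow_mod a, Nat.pow_mod b]
  interval_cases a % 9 <;> interval_cases b % 9 <;> norm_num

lemma sq_mod_nine {a : ℕ} : a ^ 2 % 9 ≠ 6 := by
  simpa using sq_add_sq_mod_nine (a := a) (b := 0)

lemma coeff_thetaPartial {N : ℕ} (hN : N % 9 = 6) : coeff N (thetaPartial N) = 0 := by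
  rw [thetaPartial, map_sum]
  refine sum_eq_zero fun i _ => ?_
  rw [coeff_neg_one_pow_mul, if_neg]
  rintro h
  exact sq_mod_nine (h ▸ hN)

lemma coeff_thetaPartial_sq {N : ℕ} (hN : N % 9 = 6) : coeff N (thetaPartial N ^ 2) = 0 := by
  rw [thetaPartial, sq, sum_mul_sum, map_sum]
  refine sum_eq_zero fun i _ => ?_
  rw [map_sum]
  refine sum_eq_zero fun j _ => ?_
  rw [mul_mul_mul_comm, ← pow_add, ← pow_add, coeff_neg_one_pow_mul, if_neg]
  rintro h
  exact sq_add_sq_mod_nine (h ▸ hN)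

/-- The fourth power of a sum is congruent modulo 2 to the sum of the fourth powers. -/
lemma exists_sum_pow_four (s : Finset ℕ) (f : ℕ → ℤ⟦X⟧) :
    ∃ r, (∑ i ∈ s, f i) ^ 4 = ∑ i ∈ s, f i ^ 4 + 2 * r := by
  induction s using Finset.induction_on with
  | empty => exact ⟨0, by simp⟩
  | insert a s ha ih =>
    obtain ⟨r, hr⟩ := ih
    rw [sum_insert ha, sum_insert ha]
    generalize ∑ i ∈ s, f i = b at *
    exact ⟨r + (2 * f a ^ 3 * b + 3 * f a ^ 2 * b ^ 2 + 2 * f a * b ^ 3),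
      by linear_combination hr⟩

lemma two_dvd_coeff_thetaPartial_pow_four {N : ℕ} (hN : N % 9 = 6) :
    2 ∣ coeff N (thetaPartial N ^ 4) := by
  obtain ⟨r, hr⟩ := exists_sum_pow_four (range (N + 1))
    (fun i => (-1) ^ (i + 1) * (X : ℤ⟦X⟧) ^ (i + 1) ^ 2)
  have h0 : coeff N (∑ i ∈ range (N + 1), ((-1) ^ (i + 1) * (X : ℤ⟦X⟧) ^ (i + 1) ^ 2) ^ 4) = 0 := by
    rw [map_sum]
    refine sum_eq_zero fun i _ => ?_
    rw [mul_pow, ← pow_mul, ← pow_mul, coeff_neg_one_pow_mul, if_neg]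
    rintro h
    refine sq_mod_nine (a := 2 * (i + 1)) ?_
    rw [← hN, h]
    ring_nf
  rw [thetaPartial, hr, map_add, h0, zero_add, show (2 : ℤ⟦X⟧) = C 2 by simp, coeff_C_mul]
  exact dvd_mul_right _ _

/-! ### Sums of three squares -/

/-- The integer triples `(x, y, z)` with `x ≡ y ≡ z ≡ 1 (mod 3)` and `x² + y² + z² = N`. The bounds
on the coordinates only serve to make the set visibly finite. -/
noncomputable def signedTriples (N : ℕ) : Finset (ℤ × ℤ × ℤ) :=
  (Icc (-N : ℤ) N ×ˢ Icc (-N : ℤ) N ×ˢ Icc (-N : ℤ) N).filter fun v =>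
    v.1 % 3 = 1 ∧ v.2.1 % 3 = 1 ∧ v.2.2 % 3 = 1 ∧ v.1 ^ 2 + v.2.1 ^ 2 + v.2.2 ^ 2 = N

lemma mem_signedTriples {N : ℕ} {v : ℤ × ℤ × ℤ} :
    v ∈ signedTriples N ↔
      v.1 % 3 = 1 ∧ v.2.1 % 3 = 1 ∧ v.2.2 % 3 = 1 ∧ v.1 ^ 2 + v.2.1 ^ 2 + v.2.2 ^ 2 = N := by
  rw [signedTriples, mem_filter, and_iff_right_iff_imp]
  rintro ⟨-, -, -, h⟩
  have key : ∀ z : ℤ, z ^ 2 ≤ N → -(N : ℤ) ≤ z ∧ z ≤ N := by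
    intro z hz
    constructor
    · rcases le_or_gt 0 z with h | h <;> nlinarith
    · rcases le_or_gt z 0 with h | h <;> nlinarith
  simp only [mem_product, mem_Icc]
  exact ⟨key _ (by nlinarith [sq_nonneg v.2.1, sq_nonneg v.2.2]),
    key _ (by nlinarith [sq_nonneg v.1, sq_nonneg v.2.2]),
    key _ (by nlinarith [sq_nonneg v.1, sq_nonneg v.2.1])⟩

lemma two_mul_sq_add_sq_ne (k : ℕ) (j x y : ℤ) : 2 * x ^ 2 + y ^ 2 ≠ 4 ^ k * (8 * j + 5) := by
  induction k generalizing x y with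
  | zero =>
    intro h
    rcases Int.even_or_odd' x with ⟨a, rfl | rfl⟩ <;> rcases Int.even_or_odd' y with ⟨b, rfl | rfl⟩
    · ring_nf at h; omega
    · rcases Int.even_mul_succ_self b with ⟨t, ht⟩
      have : b ^ 2 = 2 * t - b := by linarith
      ring_nf at h; omega
    · ring_nf at h; omega
    · rcases Int.even_mul_succ_self b with ⟨t, ht⟩
      rcases Int.even_mul_succ_self a with ⟨u, hu⟩
      have : b ^ 2 = 2 * t - b := by linarith
      have : a ^ 2 = 2 * u - a := by linarith
      ring_nf at h; omega
  | succ k ih =>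
    intro h
    rw [pow_succ (4 : ℤ) k] at h
    generalize hm : (4 : ℤ) ^ k * (8 * j + 5) = m at *
    have h' : 2 * x ^ 2 + y ^ 2 = 4 * m := by linear_combination h + 4 * hm
    rcases Int.even_or_odd' x with ⟨a, rfl | rfl⟩ <;> rcases Int.even_or_odd' y with ⟨b, rfl | rfl⟩
    · exact ih a b (by linarith)
    all_goals ring_nf at h'; omega

lemma two_mul_norm_form_ne (k : ℕ) (j x y : ℤ) :
    2 * (x ^ 2 + x * y + y ^ 2) ≠ 4 ^ k * (8 * j + 5) := by
  induction k generalizing x y with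
  | zero => intro h; omega
  | succ k ih =>
    intro h
    rw [pow_succ (4 : ℤ) k] at h
    generalize hm : (4 : ℤ) ^ k * (8 * j + 5) = m at *
    have h' : 2 * (x ^ 2 + x * y + y ^ 2) = 4 * m := by linear_combination h + 4 * hm
    rcases Int.even_or_odd' x with ⟨a, rfl | rfl⟩ <;> rcases Int.even_or_odd' y with ⟨b, rfl | rfl⟩
    · exact ih a b (by linarith)
    all_goals ring_nf at h'; omega

lemma nine_dvd_sum {N : ℕ} (hN : N % 9 = 6) {v : ℤ × ℤ × ℤ} (hv : v ∈ signedTriples N) :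
    ∃ t, v.1 + v.2.1 + v.2.2 = 9 * t := by
  obtain ⟨h1, h2, h3, h⟩ := mem_signedTriples.mp hv
  obtain ⟨x, y, z⟩ := v
  simp only at *
  obtain ⟨a, rfl⟩ : ∃ a, x = 3 * a + 1 := ⟨x / 3, by omega⟩
  obtain ⟨b, rfl⟩ : ∃ b, y = 3 * b + 1 := ⟨y / 3, by omega⟩
  obtain ⟨c, rfl⟩ : ∃ c, z = 3 * c + 1 := ⟨z / 3, by omega⟩
  ring_nf at h
  exact ⟨(3 * a + 3 * b + 3 * c + 3) / 9, by omega⟩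

/-- The orthogonal reflection of `ℤ³` in the plane `x + y + z = 0`, that is
`v ↦ v - 2 ((x + y + z) / 3) (1, 1, 1)`; the integer division is exact only if `3 ∣ x + y + z`. -/
def reflect (v : ℤ × ℤ × ℤ) : ℤ × ℤ × ℤ :=
  (v.1 - 2 * ((v.1 + v.2.1 + v.2.2) / 3), v.2.1 - 2 * ((v.1 + v.2.1 + v.2.2) / 3),
    v.2.2 - 2 * ((v.1 + v.2.1 + v.2.2) / 3))

lemma four_dvd_card_signedTriples {N k : ℕ} {j : ℤ} (hN : N % 9 = 6)
    (hk : (N : ℤ) = 4 ^ k * (8 * j + 5)) : 4 ∣ (signedTriples N).card := by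
  have hne : ∀ v ∈ signedTriples N, v.1 ≠ v.2.1 := by
    intro v hv h
    obtain ⟨-, -, -, h4⟩ := mem_signedTriples.mp hv
    rw [h, hk] at h4
    exact two_mul_sq_add_sq_ne k j v.2.1 v.2.2 (by linarith)
  have hswap : ((signedTriples N).filter fun v => ¬ v.1 < v.2.1).card =
      ((signedTriples N).filter fun v => v.1 < v.2.1).card := by
    refine card_nbij' (fun v => (v.2.1, v.1, v.2.2)) (fun v => (v.2.1, v.1, v.2.2)) ?_ ?_ ?_ ?_
    · intro v hv
      simp only [coe_filter, Set.mem_ofPred_eq, mem_signedTriples] at hv ⊢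
      obtain ⟨⟨h1, h2, h3, h4⟩, h5⟩ := hv
      have := hne v (mem_signedTriples.mpr ⟨h1, h2, h3, h4⟩)
      exact ⟨⟨h2, h1, h3, by linarith⟩, by omega⟩
    · intro v hv
      simp only [coe_filter, Set.mem_ofPred_eq, mem_signedTriples] at hv ⊢
      obtain ⟨⟨h1, h2, h3, h4⟩, h5⟩ := hv
      exact ⟨⟨h2, h1, h3, by linarith⟩, by omega⟩
    · intro v _; rfl
    · intro v _; rfl
  -- The reflection adds the same number to all coordinates, so it preserves `x < y`.
  have heven : 2 ∣ ((signedTriples N).filter fun v => v.1 < v.2.1).card := by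
    rw [← ZMod.natCast_eq_zero_iff, card_eq_sum_ones, Nat.cast_sum]
    refine sum_involution (fun v _ => reflect v) (fun _ _ => by decide) ?_ ?_ ?_
    · intro v hv _ h
      rw [mem_filter] at hv
      obtain ⟨t, ht⟩ := nine_dvd_sum hN hv.1
      obtain ⟨-, -, -, h4⟩ := mem_signedTriples.mp hv.1
      have h1 := congrArg Prod.fst h
      simp only [reflect] at h1
      -- A fixed point has coordinate sum zero, as that sum is divisible by 3.
      have ht0 : v.2.2 = - v.1 - v.2.1 := by omega
      rw [ht0, hk] at h4
      exact two_mul_norm_form_ne k j v.1 v.2.1 (by linarith)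
    · intro v hv
      rw [mem_filter] at hv ⊢
      obtain ⟨t, ht⟩ := nine_dvd_sum hN hv.1
      obtain ⟨h1, h2, h3, h4⟩ := mem_signedTriples.mp hv.1
      have hs : (v.1 + v.2.1 + v.2.2) / 3 = 3 * t := by omega
      rw [mem_signedTriples]
      simp only [reflect, hs]
      refine ⟨⟨by omega, by omega, by omega, ?_⟩, by omega⟩
      linear_combination h4 - 12 * t * ht
    · intro v hv
      rw [mem_filter] at hv
      obtain ⟨t, ht⟩ := nine_dvd_sum hN hv.1
      ext <;> simp only [reflect] <;> omega
  have := card_filter_add_card_filter_not (s := signedTriples N) (fun v => v.1 < v.2.1)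
  omega

/-- The triples `(a, b, c)` of naturals with `(a+1)² + (b+1)² + (c+1)² = N`: ordered representations
of `N` by three positive squares, with roots shifted by one as in `thetaPartial`. -/
def posTriples (N : ℕ) : Finset (ℕ × ℕ × ℕ) :=
  (range (N + 1) ×ˢ range (N + 1) ×ˢ range (N + 1)).filter fun v =>
    N = (v.1 + 1) ^ 2 + (v.2.1 + 1) ^ 2 + (v.2.2 + 1) ^ 2

lemma mem_posTriples {N : ℕ} {v : ℕ × ℕ × ℕ} :
    v ∈ posTriples N ↔ N = (v.1 + 1) ^ 2 + (v.2.1 + 1) ^ 2 + (v.2.2 + 1) ^ 2 := by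
  rw [posTriples, mem_filter, and_iff_right_iff_imp]
  intro h
  simp only [mem_product, mem_range]
  exact ⟨by nlinarith, by nlinarith, by nlinarith⟩

/-- The sign is constant because `a + b + c` and `a² + b² + c²` have the same parity. -/
lemma coeff_thetaPartial_cube (N : ℕ) :
    coeff N (thetaPartial N ^ 3) = (-1 : ℤ) ^ N * ((posTriples N).card : ℤ) := by
  rw [posTriples, card_filter, sum_product, Nat.cast_sum, mul_sum, pow_succ', sq, thetaPartial,
    sum_mul_sum, sum_mul, map_sum]
  refine sum_congr rfl fun a _ => ?_
  rw [sum_product, Nat.cast_sum, mul_sum, mul_sum, map_sum]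
  refine sum_congr rfl fun b _ => ?_
  rw [Nat.cast_sum, mul_sum, mul_sum, map_sum]
  refine sum_congr rfl fun c _ => ?_
  have hmul : ∀ (p q r : ℕ) (P Q R : ℕ), (-1) ^ p * (X : ℤ⟦X⟧) ^ P *
      ((-1) ^ q * X ^ Q * ((-1) ^ r * X ^ R)) = (-1) ^ (p + q + r) * X ^ (P + Q + R) := by
    intros; ring
  rw [hmul, coeff_neg_one_pow_mul]
  split_ifs with h
  · have hpar : ∀ m : ℕ, (-1 : ℤ) ^ m ^ 2 = (-1) ^ m := by
      intro m
      rcases Nat.even_or_odd m with h | h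
      · rw [h.neg_one_pow, (h.pow_of_ne_zero two_ne_zero).neg_one_pow]
      · rw [h.neg_one_pow, h.pow.neg_one_pow]
    have : (-1 : ℤ) ^ N = (-1) ^ (a + 1 + (b + 1) + (c + 1)) := by
      rw [h, pow_add, pow_add, hpar, hpar, hpar, ← pow_add, ← pow_add]
    rw [this]
    simp
  · simp

/-- The integer `±(a+1)` that is `1 (mod 3)`, provided `3 ∤ a + 1`. -/
def signed (a : ℕ) : ℤ := if (a + 1) % 3 = 1 then (a + 1 : ℤ) else -(a + 1)

lemma card_posTriples {N : ℕ} (hN : N % 9 = 6) :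
    (posTriples N).card = (signedTriples N).card := by
  have hsq : ∀ a, signed a ^ 2 = ((a : ℤ) + 1) ^ 2 := by
    intro a; unfold signed; split_ifs <;> ring
  refine card_nbij' (fun v => (signed v.1, signed v.2.1, signed v.2.2))
    (fun v => (v.1.natAbs - 1, v.2.1.natAbs - 1, v.2.2.natAbs - 1)) ?_ ?_ ?_ ?_
  · intro v hv
    rw [mem_coe, mem_posTriples] at hv
    rw [mem_coe, mem_signedTriples]
    have hmod : ∀ a b c : ℕ, (a ^ 2 + b ^ 2 + c ^ 2) % 9 = 6 → a % 3 ≠ 0 := by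
      intro a b c h ha
      obtain ⟨d, rfl⟩ := Nat.dvd_of_mod_eq_zero ha
      refine sq_add_sq_mod_nine (a := b) (b := c) ?_
      ring_nf at h ⊢
      omega
    have hs : ∀ a : ℕ, (a + 1) % 3 ≠ 0 → signed a % 3 = 1 := by
      intro a ha; unfold signed; split_ifs <;> omega
    refine ⟨hs _ (hmod _ (v.2.1 + 1) (v.2.2 + 1) (by omega)),
      hs _ (hmod _ (v.1 + 1) (v.2.2 + 1) (by omega)),
      hs _ (hmod _ (v.1 + 1) (v.2.1 + 1) (by omega)), ?_⟩
    rw [hsq, hsq, hsq]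
    exact_mod_cast hv.symm
  · intro v hv
    rw [mem_coe, mem_signedTriples] at hv
    obtain ⟨h1, h2, h3, h4⟩ := hv
    rw [mem_coe, mem_posTriples]
    simp only
    rw [Nat.sub_add_cancel (by omega), Nat.sub_add_cancel (by omega),
      Nat.sub_add_cancel (by omega)]
    zify
    simp only [sq_abs]
    exact h4.symm
  · intro v _
    have : ∀ a, (signed a).natAbs - 1 = a := by
      intro a; unfold signed; split_ifs <;> omega
    simp only [this]
  · intro v hv
    rw [mem_coe, mem_signedTriples] at hv
    obtain ⟨h1, h2, h3, h4⟩ := hv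
    have : ∀ z : ℤ, z % 3 = 1 → signed (z.natAbs - 1) = z := by
      intro z hz; unfold signed; split_ifs <;> omega
    simp only [this _ h1, this _ h2, this _ h3]

/-! ### The congruence modulo 32 -/

theorem overpartition_pow_four_72n_add_69 (n k : ℕ) :
    32 ∣ overpartition (4 ^ k * (72 * n + 69)) := by
  generalize hNdef : 4 ^ k * (72 * n + 69) = N
  have hN : N % 9 = 6 := by
    have h4 : 4 ^ k % 3 = 1 := by simp [Nat.pow_mod]
    obtain ⟨m, hm⟩ : ∃ m, 4 ^ k = 3 * m + 1 := ⟨4 ^ k / 3, by omega⟩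
    rw [← hNdef, hm]
    ring_nf
    omega
  have hk : (N : ℤ) = 4 ^ k * (8 * (9 * n + 8) + 5) := by
    rw [← hNdef]; push_cast; ring
  have h4 : (4 : ℤ) ∣ coeff N (thetaPartial N ^ 3) := by
    rw [coeff_thetaPartial_cube, card_posTriples hN]
    exact Dvd.dvd.mul_left (by exact_mod_cast four_dvd_card_signedTriples hN hk) _
  have hgf := genFun_mul _ _ rfl rfl
  have hco := coeff_overpartition _ _ rfl rfl N
  generalize (PowerSeries.mk fun n => ((Nat.Partition.distincts n).card : ℤ)) *
    (PowerSeries.mk fun n => (Fintype.card (Nat.Partition n) : ℤ)) = G at hgf hco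
  have hS : ∀ j, coeff N (squareSeries ^ j) = coeff N (thetaPartial N ^ j) := by
    intro j
    rw [← sub_eq_zero, ← map_sub]
    exact X_pow_dvd_iff.mp ((X_pow_dvd_squareSeries_sub N).trans (sub_dvd_pow_sub_pow _ _ j))
      N (Nat.lt_succ_self N)
  have hG : G = 1 + C (-2) * squareSeries ^ 1 + C 4 * squareSeries ^ 2 +
      C (-8) * squareSeries ^ 3 + C 16 * squareSeries ^ 4 + C (-32) * (G * squareSeries ^ 5) := by
    simp only [map_neg, map_ofNat]
    linear_combination (1 - 2 * squareSeries + 4 * squareSeries ^ 2 - 8 * squareSeries ^ 3 +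
      16 * squareSeries ^ 4) * hgf
  have hc := congrArg (coeff N) hG
  simp only [map_add, coeff_C_mul, hS] at hc
  rw [hco, pow_one, coeff_thetaPartial hN, coeff_thetaPartial_sq hN, coeff_one,
    if_neg (by omega)] at hc
  have h2 := two_dvd_coeff_thetaPartial_pow_four hN
  zify
  omega
end
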